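/- arXiv:2110.10146 — 3 statements merged into one kernel-verified Lean document; each statement's English description precedes it below -/
import Mathlib

section
/- There exists a unique real number t ≥ 0 such that ∫₁^∞ P(s) e^{(1−s)t} ds = 1; moreover this unique t satisfies 0.8035 < t < 0.8036. -/
open MeasureTheory Real

/-- The prime zeta function `P(s) = ∑_p p^{-s}` (sum over all primes). -/
noncomputable def primeZeta (s : ℝ) : ℝ := ∑' p : Nat.Primes, (p.1 : ℝ) ^ (-s)

/-- The set of `k`-almost primes: positive integers with exactly `k` prime
factors counted with multiplicity. -/
def almostPrimes (k : ℕ) : Set ℕ := {n | 0 < n ∧ n.primeFactorsList.length = k}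

/-- `P_k(s) = ∑_{n ∈ N_k} n^{-s}`; note `P_0(s) = 1` since `N_0 = {1}`. -/
noncomputable def Pk (k : ℕ) (s : ℝ) : ℝ := ∑' n : almostPrimes k, (n.1 : ℝ) ^ (-s)

/-- Translated sum `f(A, h) = ∑_{a ∈ A} 1/(a (log a + h))`. -/
noncomputable def transSum (A : Set ℕ) (h : ℝ) : ℝ :=
  ∑' a : A, 1 / ((a.1 : ℝ) * (Real.log a.1 + h))

namespace PZ

def D : ℕ := 1152921504606846976
def V : ℕ := 1073741824
def S : ℕ := 67108864
def Du : ℕ := 134217728000000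
def W : ℕ := 8388608

def stLo (y k acc : ℕ) : ℕ := D + y * acc / (D * k)
def stHi (y k acc : ℕ) : ℕ := D + (y * acc / (D * k) + 1)

def hLo (y acc : ℕ) : ℕ :=
  stLo y 1 (stLo y 2 (stLo y 3 (stLo y 4 (stLo y 5 (stLo y 6 (stLo y 7 (stLo y 8 (stLo y 9 (stLo y 10 acc)))))))))

def hHi (y acc : ℕ) : ℕ :=
  stHi y 1 (stHi y 2 (stHi y 3 (stHi y 4 (stHi y 5 (stHi y 6 (stHi y 7 (stHi y 8 (stHi y 9 (stHi y 10 acc)))))))))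

def sqLo : ℕ → ℕ → ℕ
  | 0, z => z
  | k + 1, z => sqLo k (z * z / D)

def sqHi : ℕ → ℕ → ℕ
  | 0, z => z
  | k + 1, z => sqHi k (z * z / D + 1)

def expLo (x : ℕ) : ℕ := sqLo 6 (hLo (x / 64) D)
def expHi (x : ℕ) : ℕ := sqHi 6 (hHi (x / 64 + 1) (D + D / 10 + 1))
def negHi (x : ℕ) : ℕ := D * D / expLo x + 1
def negLo (x : ℕ) : ℕ := bif Nat.ble (x / 64 + 1) D then D * D / expHi x else 0

def pwHi (l a : ℕ) : ℕ := negHi (l * a / Du)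
def pwLo (l a : ℕ) : ℕ := negLo ((l + W) * a / Du + 1)

def tabZ : List (ℕ × ℕ) :=
  [(2,799144290320971674), (3,1266613732826614423), (4,1598288580646137653),
  (5,1855555579570631530), (6,2065758023151780402), (7,2243481656874391380),
  (8,2397432870971303632), (9,2533227465657423150), (10,2654699869895797509),
  (11,2764585025800148847), (12,2864902313476946380), (13,2957185272440726013),
  (14,3042625947199557359), (15,3122169312401440258), (16,3196577161296469610),
  (17,3266472591497294749), (18,3332371755982589129), (19,3394707018079426788),
  (20,3453844160220963488), (21,3510095389705200107), (22,3563729316125314826),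
  (23,3614978709110906898), (24,3664046603802112359), (25,3711111159145457365),
  (26,3756329562765891991), (27,3799841198488231878), (28,3841770237524723337),
  (29,3882227774760172922), (30,3921313602726606237), (31,3959117694591480802),
  (32,3995721451621635589), (33,4031198758630957574), (34,4065616881822460728),
  (35,4099037236449217215), (36,4131516046307755108), (37,4163104912853400175),
  (38,4193851308404592766), (39,4223799005271534740), (40,4252988450546129467),
  (41,4281457094606494551), (42,4309239680030366086), (43,4336368496508674604),
  (44,4362873606450480804), (45,4388783045232248985), (46,4414122999436072876),
  (47,4438917965917809843), (48,4463190894127278338), (49,4486963313752977064),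
  (50,4510255449470623344), (51,4533086324328103477), (52,4555473853091057970),
  (53,4577434926696715624), (54,4598985488813397856), (55,4620140605374974682),
  (56,4640914527849889316), (57,4661320750910235515), (58,4681372065085338901),
  (59,4701080604914344666), (60,4720457893051772215), (61,4739514880727462790),
  (62,4758261984916646780), (63,4776709122536008835)]

def tabP : List (ℕ × ℕ) :=
  [(2,799144290320971674), (3,1266613732826614423), (5,1855555579570631530),
  (7,2243481656874391380), (11,2764585025800148847), (13,2957185272440726013),
  (17,3266472591497294749), (19,3394707018079426788), (23,3614978709110906898),
  (29,3882227774760172922), (31,3959117694591480802), (37,4163104912853400175),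
  (41,4281457094606494551), (43,4336368496508674604), (47,4438917965917809843),
  (53,4577434926696715624), (59,4701080604914344666), (61,4739514880727462790),
  (67,4847680541153342850), (71,4914535297491608534), (73,4946562954339260621),
  (79,5037630392363240443), (83,5094576362154493560), (89,5175045397020399842),
  (97,5274282664473387011), (101,5320871690214359800), (103,5343478718550486937),
  (107,5387404850593885639), (109,5408755859009575199), (113,5450307076805717729),
  (127,5584967464312703064)]

def l64 : ℕ := 4794865741946801568
def lH : ℕ := 4785823173987537086

def sumLo (a : ℕ) : List (ℕ × ℕ) → ℕ
  | [] => 0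
  | x :: r => pwLo x.2 a / x.1 + sumLo a r

def sumHi (a : ℕ) : List (ℕ × ℕ) → ℕ
  | [] => 0
  | x :: r => (pwHi x.2 a / x.1 + 1) + sumHi a r

def sq2Lo (a : ℕ) : List (ℕ × ℕ) → ℕ
  | [] => 0
  | x :: r => (pwLo x.2 a / x.1) ^ 2 / D + sq2Lo a r

def sq2Hi (a : ℕ) : List (ℕ × ℕ) → ℕ
  | [] => 0
  | x :: r => ((pwHi x.2 a / x.1 + 1) ^ 2 / D + 1) + sq2Hi a r

def pLo (a : ℕ) : List (ℕ × ℕ) → ℕ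
  | [] => D
  | x :: r => pLo a r * (x.1 * D - pwHi x.2 a) / (x.1 * D + pwHi x.2 a)

def pHi (a : ℕ) : List (ℕ × ℕ) → ℕ
  | [] => D
  | x :: r => pHi a r * (x.1 * D - pwLo x.2 a) / (x.1 * D + pwLo x.2 a) + 1

def ZLo (a : ℕ) : ℕ := D + sumLo a tabZ + pwLo l64 a / 128 + pwLo l64 a * Du / a
def ZHi (a : ℕ) : ℕ := D + sumHi a tabZ + (pwHi lH a * Du / a + 1)
def Z2Lo (a : ℕ) : ℕ := D + sq2Lo a tabZ + (pwLo l64 a) ^ 2 / (D * 8192)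
  + (pwLo l64 a) ^ 2 * Du / (D * 64 * (Du + 2 * a))
def Z2Hi (a : ℕ) : ℕ := D + sq2Hi a tabZ + ((pwHi lH a) ^ 2 * 2 * Du / (D * 127 * (Du + 2 * a)) + 1)

def nodeLo (a L : ℕ) : Bool :=
  Nat.ble 1 a && (Nat.ble L 0 || (Nat.ble (2 * L * V / 64 + 1) D &&
    Nat.ble (expHi (2 * L * V) * Z2Hi a * D) (ZLo a ^ 2 * pLo a tabP)))

def nodeHi (a L : ℕ) : Bool :=
  Nat.ble 1 a && Nat.ble (ZHi a ^ 2 * pHi a tabP) (expLo (2 * L * V) * Z2Lo a * D)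

def entryOk (x : ℕ × ℕ) : Bool :=
  Nat.ble 1 x.1 && (Nat.ble (x.2 / 64 + 1) D && (Nat.ble (expHi x.2) (x.1 * D) &&
    Nat.ble (x.1 * D) (expLo (x.2 + W))))

def tabOk : Bool := tabZ.all entryOk && (tabP.all entryOk && (entryOk (64, l64) &&
  (Nat.ble (lH / 64 + 1) D && Nat.ble (2 * expHi lH) (127 * D))))

def nLo1 (a b : ℕ) : ℕ := (a + b) * 1000000 - (b - a) * 774596
def nMid (a b : ℕ) : ℕ := (a + b) * 1000000
def nLo3 (a b : ℕ) : ℕ := (a + b) * 1000000 + (b - a) * 774596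
def nHi2 (a b : ℕ) : ℕ := (a + b) * 1000000 - (b - a) * 447214
def nHi3 (a b : ℕ) : ℕ := (a + b) * 1000000 + (b - a) * 447214

def panLo : ℕ → List (ℕ × ℕ × ℕ × ℕ) → Bool
  | _, [] => true
  | a, x :: r => (Nat.ble a x.1 && (nodeLo (nLo1 a x.1) x.2.1 && (nodeLo (nMid a x.1) x.2.2.1 &&
      nodeLo (nLo3 a x.1) x.2.2.2))) && panLo x.1 r

def panHi : ℕ → List (ℕ × ℕ × ℕ × ℕ) → Bool
  | _, [] => true
  | a, x :: r => (Nat.ble a x.1 && (nodeHi (nHi2 a x.1) x.2.1 && (nodeHi (nHi3 a x.1) x.2.2.1 &&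
      nodeHi (2000000 * x.1) x.2.2.2))) && panHi x.1 r

def eLo (a : ℕ) : ℕ := negLo (D * a * 8035 / (Du * 10000) + 1)
def eHi (a : ℕ) : ℕ := negHi (D * a * 8036 / (Du * 10000))

def totLo : ℕ → List (ℕ × ℕ × ℕ × ℕ) → ℕ
  | _, [] => 0
  | a, x :: r => (x.1 - a) * V * (5 * (eLo (nLo1 a x.1) * x.2.1) + 8 * (eLo (nMid a x.1) * x.2.2.1)
      + 5 * (eLo (nLo3 a x.1) * x.2.2.2)) / (18 * S * D) + totLo x.1 r

/-- the last panel end also carries the tail, with weight one -/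
def totHi : ℕ → ℕ → List (ℕ × ℕ × ℕ × ℕ) → ℕ
  | a, La, [] => eHi (2000000 * a) * La * V / D + 1
  | a, La, x :: r => ((x.1 - a) * V * (eHi (2000000 * a) * La + 5 * (eHi (nHi2 a x.1) * x.2.1)
      + 5 * (eHi (nHi3 a x.1) * x.2.2.1) + eHi (2000000 * x.1) * x.2.2.2) / (12 * S * D) + 1)
      + totHi x.1 x.2.2.2 r

def headLo : List (ℕ × ℕ) → ℕ
  | [] => 0
  | x :: r => D * D * 10000 / (x.1 * ((x.2 + W) * 10000 + 8035 * D)) + headLo r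

def headHi : List (ℕ × ℕ) → ℕ
  | [] => 0
  | x :: r => (D * D * 10000 / (x.1 * (x.2 * 10000 + 8036 * D)) + 1) + headHi r

def datL : List (ℕ × ℕ × ℕ × ℕ) :=
  [(15,16000355498,14784349371,14228724458), (239,13049667903,11815735889,11256707411),
  (2268,10416053615,9357484960,8834978074), (11634,8310644687,7518675338,7068064767),
  (42773,6683222695,6055203462,5662148025), (126720,5356690521,4839646897,4493550747),
  (322816,4240110862,3803360915,3496766169), (734208,3281883813,2909079796,2638512295),
  (1528832,2455377337,2138082026,1903042672), (2964736,1749013473,1484688718,1287427432),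
  (5422592,1162407861,951891761,795992060), (9442304,701009313,545974407,434126226),
  (15765504,369305328,268348526,199027692), (25392640,161393374,106582855,71823209),
  (39743232,54475323,31454567,18528919), (61288192,12728073,5983818,2871495),
  (96110336,1659377,530102,173390), (147639500,78254,15599,3117)]

def datH : List (ℕ × ℕ × ℕ × ℕ) :=
  [(15,15317408623,14429749723,14109387031), (239,12354240538,11458764689,11136843605),
  (3823,9378160425,8482309931,8160364331), (27762,7082242400,6325222826,6033427101),
  (125696,5304810598,4677871410,4419613003), (429824,3876406905,3350409655,3123320156),
  (1214976,2701342724,2262758080,2068012033), (2990592,1740601914,1388493736,1231222325),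
  (6623488,990487543,732364077,619773701), (13491712,464241754,305259981,240312952),
  (25677568,161224905,88555589,62378388), (46456576,35168068,14562727,8614473),
  (83195136,3495186,853447,364903), (162403450,60779,3686,743)]

def LH0 : ℕ := 17017132683

theorem tabOk_true : tabOk = true := by decide +kernel
theorem panLo_true : panLo 1 datL = true := by decide +kernel
theorem panHi_true : (nodeHi 2000000 LH0 && panHi 1 datH) = true := by decide +kernel
theorem totLo_true : Nat.ble (D * 51481 + 1) (headLo tabP * 51481 + totLo 1 datL * 51480) = true := by
  decide +kernel
theorem totHi_true : Nat.ble (headHi tabP + totHi 1 LH0 datH + 20 * (D / S) + 1) D = true := by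
  decide +kernel


end PZ

namespace PZ

lemma Dpos : (0:ℝ) < (D:ℝ) := by norm_num [D]
lemma Dupos : (0:ℝ) < (Du:ℝ) := by norm_num [Du]

lemma div_up (m n : ℕ) : (m:ℝ) / n ≤ ((m / n : ℕ) : ℝ) + 1 := by
  rcases Nat.eq_zero_or_pos n with h | h
  · subst h; simp
  · have hn : (0:ℝ) < n := by exact_mod_cast h
    rw [div_le_iff₀ hn]
    have := Nat.lt_div_mul_add (a := m) h
    have h2 : m ≤ (m / n + 1) * n := by nlinarith
    exact_mod_cast h2

lemma div_dn (m n : ℕ) : ((m / n : ℕ) : ℝ) ≤ (m:ℝ) / n := Nat.cast_div_le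

lemma stLo_le (y k acc : ℕ) (v : ℝ) (hv : (acc:ℝ) / D ≤ v) :
    ((stLo y k acc : ℕ) : ℝ) / D ≤ 1 + (y:ℝ) / D * v / k := by
  have hD := Dpos
  rw [stLo]
  have h1 := div_dn (y * acc) (D * k)
  push_cast at h1 ⊢
  have h2 : ((D:ℝ) + ((y * acc / (D * k) : ℕ) : ℝ)) / D ≤ 1 + (y:ℝ) / D * (acc / D) / k := by
    rw [div_le_iff₀ hD]
    have : (1 + ((y:ℝ) / D) * ((acc:ℝ) / D) / k) * D = D + (y * acc) / (D * k) := by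
      field_simp
    rw [this]
    linarith
  refine h2.trans ?_
  gcongr

lemma stHi_ge (y k acc : ℕ) (v : ℝ) (hv : v ≤ (acc:ℝ) / D) :
    1 + (y:ℝ) / D * v / k ≤ ((stHi y k acc : ℕ) : ℝ) / D := by
  have hD := Dpos
  rw [stHi]
  have h1 := div_up (y * acc) (D * k)
  push_cast at h1 ⊢
  have h2 : 1 + (y:ℝ) / D * (acc / D) / k ≤ ((D:ℝ) + (((y * acc / (D * k) : ℕ) : ℝ) + 1)) / D := by
    rw [le_div_iff₀ hD]
    have : (1 + ((y:ℝ) / D) * ((acc:ℝ) / D) / k) * D = D + (y * acc) / (D * k) := by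
      field_simp
    rw [this]
    linarith
  refine le_trans ?_ h2
  gcongr

lemma hLo_le (y : ℕ) (acc : ℕ) : ((hLo y acc : ℕ) : ℝ) / D ≤
    (∑ i ∈ Finset.range 10, ((y:ℝ) / D) ^ i / (i.factorial : ℝ)) +
      ((y:ℝ) / D) ^ 10 / ((10:ℕ).factorial : ℝ) * ((acc : ℝ) / D) := by
  refine (stLo_le _ _ _ _ (stLo_le _ _ _ _ (stLo_le _ _ _ _ (stLo_le _ _ _ _ (stLo_le _ _ _ _
    (stLo_le _ _ _ _ (stLo_le _ _ _ _ (stLo_le _ _ _ _ (stLo_le _ _ _ _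
    (stLo_le _ _ _ _ le_rfl)))))))))).trans (le_of_eq ?_)
  generalize (y:ℝ) / D = Y
  generalize (acc:ℝ) / D = X
  simp only [Finset.sum_range_succ, Finset.sum_range_zero, Nat.factorial]
  push_cast
  ring

lemma hHi_ge (y : ℕ) (acc : ℕ) :
    (∑ i ∈ Finset.range 10, ((y:ℝ) / D) ^ i / (i.factorial : ℝ)) +
      ((y:ℝ) / D) ^ 10 / ((10:ℕ).factorial : ℝ) * ((acc : ℝ) / D) ≤ ((hHi y acc : ℕ) : ℝ) / D := by
  refine le_trans (le_of_eq ?_) (stHi_ge _ _ _ _ (stHi_ge _ _ _ _ (stHi_ge _ _ _ _ (stHi_ge _ _ _ _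
    (stHi_ge _ _ _ _ (stHi_ge _ _ _ _ (stHi_ge _ _ _ _ (stHi_ge _ _ _ _ (stHi_ge _ _ _ _
    (stHi_ge _ _ _ _ le_rfl))))))))))
  generalize (y:ℝ) / D = Y
  generalize (acc:ℝ) / D = X
  simp only [Finset.sum_range_succ, Finset.sum_range_zero, Nat.factorial]
  push_cast
  ring

lemma sqLo_le (k : ℕ) : ∀ z : ℕ, ((sqLo k z : ℕ) : ℝ) / D ≤ ((z:ℝ) / D) ^ (2 ^ k) := by
  have hD := Dpos
  induction k with
  | zero => intro z; simp [sqLo]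
  | succ k ih =>
    intro z
    rw [sqLo]
    refine (ih _).trans ?_
    rw [pow_succ' 2 k, pow_mul]
    gcongr
    have h1 := div_dn (z * z) D
    push_cast at h1
    rw [div_le_iff₀ hD]
    refine h1.trans (le_of_eq ?_)
    field_simp

lemma sqHi_ge (k : ℕ) : ∀ z : ℕ, ((z:ℝ) / D) ^ (2 ^ k) ≤ ((sqHi k z : ℕ) : ℝ) / D := by
  have hD := Dpos
  induction k with
  | zero => intro z; simp [sqHi]
  | succ k ih =>
    intro z
    rw [sqHi]
    refine le_trans ?_ (ih _)
    rw [pow_succ' 2 k, pow_mul]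
    gcongr
    have h1 := div_up (z * z) D
    push_cast at h1 ⊢
    rw [le_div_iff₀ hD]
    refine le_trans (le_of_eq ?_) h1
    field_simp

lemma expLo_le (x : ℕ) : ((expLo x : ℕ) : ℝ) / D ≤ Real.exp ((x:ℝ) / D) := by
  have hD := Dpos
  unfold expLo
  refine (sqLo_le _ _).trans ?_
  have h1 := hLo_le (x / 64) D
  rw [div_self hD.ne', mul_one] at h1
  have h1' := h1.trans_eq (Finset.sum_range_succ (fun i => (((x/64:ℕ):ℝ) / D) ^ i / (i.factorial : ℝ)) 10).symm
  have h2 := h1'.trans (Real.sum_le_exp_of_nonneg (by positivity) _)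
  calc _ ≤ (Real.exp (((x/64:ℕ):ℝ) / D)) ^ (2 ^ 6) := by gcongr
    _ = Real.exp (64 * (((x/64:ℕ):ℝ) / D)) := by rw [← Real.exp_nat_mul]; norm_num
    _ ≤ _ := by
      apply Real.exp_le_exp.mpr
      have := div_dn x 64
      push_cast at this
      rw [← mul_div_assoc]
      gcongr
      linarith

lemma expHi_ge (x : ℕ) (hx : x / 64 + 1 ≤ D) : Real.exp ((x:ℝ) / D) ≤ ((expHi x : ℕ) : ℝ) / D := by
  have hD := Dpos
  unfold expHi
  refine le_trans ?_ (sqHi_ge _ _)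
  have h1 := hHi_ge (x / 64 + 1) (D + D / 10 + 1)
  have hx' : ((x / 64 + 1 : ℕ) : ℝ) / D ≤ 1 := by
    rw [div_le_one hD]; exact_mod_cast hx
  have h2 := Real.exp_bound' (x := ((x / 64 + 1 : ℕ) : ℝ) / D) (by positivity) hx' (n := 10) (by norm_num)
  have h3 : (11:ℝ)/10 ≤ ((D + D / 10 + 1 : ℕ):ℝ) / D := by
    rw [le_div_iff₀ hD]
    have := div_up D 10
    push_cast at this ⊢
    linarith
  have h4 : Real.exp (((x / 64 + 1 : ℕ) : ℝ) / D) ≤ ((hHi (x / 64 + 1) (D + D / 10 + 1) : ℕ) : ℝ) / D := by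
    refine h2.trans (le_trans ?_ h1)
    gcongr
    have h5 : (0:ℝ) ≤ (((x / 64 + 1 : ℕ) : ℝ) / D) ^ 10 / ((10:ℕ).factorial : ℝ) := by positivity
    refine le_trans (le_of_eq ?_) (mul_le_mul_of_nonneg_left h3 h5)
    push_cast
    field_simp
    norm_num
  calc Real.exp ((x:ℝ) / D) ≤ Real.exp (64 * (((x/64+1:ℕ):ℝ) / D)) := by
        apply Real.exp_le_exp.mpr
        have := div_up x 64
        push_cast at this ⊢
        rw [← mul_div_assoc]
        gcongr
        linarith
    _ = (Real.exp (((x/64+1:ℕ):ℝ) / D)) ^ (2 ^ 6) := by rw [← Real.exp_nat_mul]; norm_num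
    _ ≤ _ := by gcongr

lemma hLo_pos (y acc : ℕ) : D ≤ hLo y acc := by
  rw [hLo, stLo]
  exact Nat.le_add_right _ _

lemma sqLo_pos (k : ℕ) : ∀ z : ℕ, D ≤ z → D ≤ sqLo k z := by
  have hD : 0 < D := by norm_num [D]
  induction k with
  | zero => intro acc h; simpa [sqLo] using h
  | succ k ih =>
    intro z h; rw [sqLo]; apply ih
    rw [Nat.le_div_iff_mul_le hD]
    exact Nat.mul_le_mul h h

lemma expLo_pos (x : ℕ) : D ≤ expLo x := sqLo_pos _ _ (hLo_pos _ _)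

lemma negHi_ge (x : ℕ) : Real.exp (-((x:ℝ) / D)) ≤ ((negHi x : ℕ):ℝ) / D := by
  have hD := Dpos
  have h1 := expLo_le x
  have h0 : (0:ℝ) < expLo x := lt_of_lt_of_le hD (by exact_mod_cast expLo_pos x)
  rw [Real.exp_neg, negHi]
  have h2 := div_up (D * D) (expLo x)
  push_cast at h2 ⊢
  rw [le_div_iff₀ hD]
  refine le_trans ?_ h2
  calc (Real.exp ((x:ℝ)/D))⁻¹ * D ≤ ((expLo x : ℝ) / D)⁻¹ * D := by gcongr
    _ = _ := by field_simp

lemma negLo_le (x : ℕ) : ((negLo x : ℕ):ℝ) / D ≤ Real.exp (-((x:ℝ) / D)) := by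
  have hD := Dpos
  unfold negLo
  cases hc : Nat.ble (x / 64 + 1) D with
  | false => simp; positivity
  | true =>
    have h1 := expHi_ge x (Nat.le_of_ble_eq_true hc)
    have h0 : (0:ℝ) < expHi x := by
      have := lt_of_lt_of_le (Real.exp_pos _) h1
      by_contra hcon
      have h3 : (expHi x : ℝ) / D ≤ 0 := div_nonpos_of_nonpos_of_nonneg (not_lt.mp hcon) hD.le
      linarith
    rw [Real.exp_neg, cond_true]
    have h2 := div_dn (D * D) (expHi x)
    push_cast at h2
    rw [div_le_iff₀ hD]
    refine h2.trans ?_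
    calc _ = ((expHi x : ℝ) / D)⁻¹ * D := by field_simp
      _ ≤ _ := by gcongr

lemma pwHi_ge (l a : ℕ) (v : ℝ) (hv : (l:ℝ) / D ≤ v) :
    Real.exp (-(((a:ℝ) / Du) * v)) ≤ ((pwHi l a : ℕ) : ℝ) / D := by
  have hD := Dpos
  have hDu := Dupos
  refine le_trans ?_ (negHi_ge _)
  apply Real.exp_le_exp.mpr
  apply neg_le_neg
  have h1 := div_dn (l * a) Du
  push_cast at h1
  calc _ ≤ ((l:ℝ) * a / Du) / D := by gcongr
    _ = ((a:ℝ) / Du) * (l / D) := by field_simp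
    _ ≤ _ := by gcongr

lemma pwLo_le (l a : ℕ) (v : ℝ) (hv : v ≤ ((l + W : ℕ):ℝ) / D) :
    ((pwLo l a : ℕ) : ℝ) / D ≤ Real.exp (-(((a:ℝ) / Du) * v)) := by
  have hD := Dpos
  have hDu := Dupos
  refine le_trans (negLo_le _) ?_
  apply Real.exp_le_exp.mpr
  apply neg_le_neg
  have h1 := div_up ((l + W) * a) Du
  push_cast at h1 hv ⊢
  calc ((a:ℝ) / Du) * v ≤ ((a:ℝ) / Du) * (((l:ℝ) + W) / D) := by gcongr
    _ = (((l:ℝ) + W) * a / Du) / D := by field_simp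
    _ ≤ _ := by gcongr

/-- table entries bracket the logarithm -/
lemma entry_sound (x : ℕ × ℕ) (h : entryOk x = true) :
    1 ≤ x.1 ∧ (x.2:ℝ) / D ≤ Real.log x.1 ∧ Real.log x.1 ≤ ((x.2 + W : ℕ):ℝ) / D := by
  have hD := Dpos
  simp only [entryOk, Bool.and_eq_true] at h
  obtain ⟨h1, h2, h3, h4⟩ := h
  have h1 := Nat.le_of_ble_eq_true h1
  have h2 := Nat.le_of_ble_eq_true h2
  have h3 : ((expHi x.2 : ℕ):ℝ) ≤ x.1 * D := by exact_mod_cast Nat.le_of_ble_eq_true h3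
  have h4 : (x.1 : ℝ) * D ≤ (expLo (x.2 + W) : ℕ) := by exact_mod_cast Nat.le_of_ble_eq_true h4
  have hx : (0:ℝ) < x.1 := by exact_mod_cast h1
  refine ⟨h1, ?_, ?_⟩
  · rw [Real.le_log_iff_exp_le hx]
    refine (expHi_ge _ h2).trans ?_
    rwa [div_le_iff₀ hD]
  · rw [Real.log_le_iff_le_exp hx]
    refine le_trans ?_ (expLo_le _)
    rwa [le_div_iff₀ hD]

lemma tab_sound : (∀ x ∈ tabZ, entryOk x = true) ∧ (∀ x ∈ tabP, entryOk x = true) ∧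
    entryOk (64, l64) = true ∧ (lH:ℝ) / D ≤ Real.log (127 / 2) := by
  have hD := Dpos
  have h := tabOk_true
  simp only [tabOk, Bool.and_eq_true, List.all_eq_true] at h
  obtain ⟨h1, h2, h3, h4, h5⟩ := h
  refine ⟨h1, h2, h3, ?_⟩
  rw [Real.le_log_iff_exp_le (by norm_num)]
  refine (expHi_ge _ (Nat.le_of_ble_eq_true h4)).trans ?_
  have h5 : 2 * ((expHi lH : ℕ):ℝ) ≤ 127 * D := by exact_mod_cast Nat.le_of_ble_eq_true h5
  rw [div_le_iff₀ hD]
  linarith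

end PZ

namespace PZ

lemma rpow_tangent {x c s : ℝ} (hx : 0 < x) (hc : 0 < c) (hs : 0 ≤ s) :
    c ^ (-s) - s * c ^ (-s - 1) * (x - c) ≤ x ^ (-s) := by
  have h1 : x ^ (-s) = c ^ (-s) * (x / c) ^ (-s) := by
    rw [← Real.mul_rpow hc.le (by positivity)]
    congr 1
    field_simp
  have h2 : 1 - s * (x / c - 1) ≤ (x / c) ^ (-s) := by
    have hr : 0 < x / c := by positivity
    rw [Real.rpow_def_of_pos hr]
    have := Real.add_one_le_exp (Real.log (x / c) * -s)
    have h3 := Real.log_le_sub_one_of_pos hr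
    nlinarith
  have h4 : c ^ (-s - 1) = c ^ (-s) / c := by rw [Real.rpow_sub hc, Real.rpow_one]
  have h5 : 0 < c ^ (-s) := Real.rpow_pos_of_pos hc _
  rw [h1, h4]
  refine le_trans (le_of_eq ?_) (mul_le_mul_of_nonneg_left h2 h5.le)
  field_simp

lemma int_rpow {a b s : ℝ} (ha : 0 < a) (hab : a ≤ b) (hs : 1 < s) :
    ∫ x in a..b, x ^ (-s) = a ^ (1 - s) / (s - 1) - b ^ (1 - s) / (s - 1) := by
  rw [integral_rpow]
  · have h1 : -s + 1 = 1 - s := by ring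
    have h2 : s - 1 ≠ 0 := by linarith
    have h3 : 1 - s ≠ 0 := by intro h; apply h2; linarith
    rw [h1]
    rw [show s - 1 = -(1 - s) by ring, div_neg, div_neg]
    ring
  · right
    refine ⟨by intro h; linarith, ?_⟩
    rw [Set.uIcc_of_le hab]
    intro h
    exact absurd h.1 (not_le.mpr ha)

lemma ii_rpow {a b s : ℝ} (ha : 0 < a) (hab : a ≤ b) :
    IntervalIntegrable (fun x : ℝ => x ^ (-s)) volume a b := by
  apply ContinuousOn.intervalIntegrable
  intro x hx
  rw [Set.uIcc_of_le hab] at hx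
  exact (Real.continuousAt_rpow_const x (-s) (Or.inl (by linarith [hx.1]))).continuousWithinAt

lemma mid_le {c s : ℝ} (hc : 1 / 2 < c) (hs : 1 < s) :
    c ^ (-s) ≤ (c - 1/2) ^ (1 - s) / (s - 1) - (c + 1/2) ^ (1 - s) / (s - 1) := by
  rw [← int_rpow (by linarith) (by linarith) hs]
  have h1 : ∫ x in (c - 1/2)..(c + 1/2), (c ^ (-s) - s * c ^ (-s - 1) * (x - c)) = c ^ (-s) := by
    rw [intervalIntegral.integral_sub (by simp) (by apply Continuous.intervalIntegrable; fun_prop),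
      intervalIntegral.integral_const_mul, intervalIntegral.integral_sub (by simp) (by simp), integral_id]
    simp
    ring_nf
  rw [← h1]
  apply intervalIntegral.integral_mono_on (by linarith)
  · apply Continuous.intervalIntegrable; fun_prop
  · exact ii_rpow (by linarith) (by linarith)
  · intro x hx
    have := rpow_tangent (x := x) (c := c) (s := s) (by linarith [hx.1]) (by linarith) (by linarith)
    exact this

lemma trap_ge {a s : ℝ} (ha : 0 < a) (hs : 1 < s) :
    a ^ (1 - s) / (s - 1) - (a + 1) ^ (1 - s) / (s - 1) ≤ (a ^ (-s) + (a + 1) ^ (-s)) / 2 := by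
  rw [← int_rpow (by linarith) (by linarith) hs]
  set A := a ^ (-s) with hA
  set B := (a + 1) ^ (-s) with hB
  have h1 : ∫ x in a..(a+1), ((a + 1 - x) * A + (x - a) * B) = (A + B) / 2 := by
    rw [intervalIntegral.integral_add (by apply Continuous.intervalIntegrable; fun_prop)
      (by apply Continuous.intervalIntegrable; fun_prop),
      intervalIntegral.integral_mul_const, intervalIntegral.integral_mul_const,
      intervalIntegral.integral_sub (by simp) (by simp),
      intervalIntegral.integral_sub (by simp) (by simp), integral_id]
    simp
    ring
  rw [← h1]
  apply intervalIntegral.integral_mono_on (by linarith)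
  · exact ii_rpow (by linarith) (by linarith)
  · apply Continuous.intervalIntegrable; fun_prop
  · intro x hx
    have hx0 : 0 < x := by linarith [hx.1]
    have e1 := rpow_tangent (x := a) (c := x) (s := s) ha hx0 (by linarith)
    have e2 := rpow_tangent (x := a + 1) (c := x) (s := s) (by linarith) hx0 (by linarith)
    rw [← hA] at e1
    rw [← hB] at e2
    have e3 := mul_le_mul_of_nonneg_left e1 (by linarith [hx.2] : 0 ≤ a + 1 - x)
    have e4 := mul_le_mul_of_nonneg_left e2 (by linarith [hx.1] : 0 ≤ x - a)
    refine le_trans (le_of_eq ?_) (add_le_add e3 e4)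
    ring

/-- the zeta function on the real half line -/
noncomputable def Z (s : ℝ) : ℝ := ∑' n : ℕ, (n:ℝ) ^ (-s)

lemma Z_summable {s : ℝ} (hs : 1 < s) : Summable (fun n : ℕ => (n:ℝ) ^ (-s)) :=
  Real.summable_nat_rpow.mpr (by linarith)

lemma psum_up {s : ℝ} (hs : 1 < s) (M : ℕ) (hM : 1 ≤ M) (k : ℕ) :
    ∑ n ∈ Finset.range (M + k), (n:ℝ) ^ (-s) ≤ (∑ n ∈ Finset.range M, (n:ℝ) ^ (-s)) +
      (((M:ℝ) - 1/2) ^ (1 - s) / (s - 1) - ((M:ℝ) + k - 1/2) ^ (1 - s) / (s - 1)) := by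
  induction k with
  | zero => simp
  | succ k ih =>
    rw [← add_assoc, Finset.sum_range_succ]
    have hM' : (1:ℝ) ≤ M := by exact_mod_cast hM
    have hk : (0:ℝ) ≤ k := Nat.cast_nonneg k
    have := mid_le (c := (M:ℝ) + k) (s := s) (by linarith) hs
    push_cast
    rw [show (M:ℝ) + (k + 1) - 1/2 = M + k + 1/2 by ring]
    linarith

lemma psum_lo {s : ℝ} (hs : 1 < s) (M : ℕ) (hM : 1 ≤ M) (k : ℕ) :
    (∑ n ∈ Finset.range M, (n:ℝ) ^ (-s)) + (M:ℝ) ^ (-s) / 2 - ((M:ℝ) + k) ^ (-s) / 2 +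
      ((M:ℝ) ^ (1 - s) / (s - 1) - ((M:ℝ) + k) ^ (1 - s) / (s - 1)) ≤
    ∑ n ∈ Finset.range (M + k), (n:ℝ) ^ (-s) := by
  induction k with
  | zero => simp
  | succ k ih =>
    rw [← add_assoc, Finset.sum_range_succ]
    have hM' : (1:ℝ) ≤ M := by exact_mod_cast hM
    have hk : (0:ℝ) ≤ k := Nat.cast_nonneg k
    have := trap_ge (a := (M:ℝ) + k) (s := s) (by linarith) hs
    push_cast
    rw [← add_assoc]
    linarith

lemma Z_le {s : ℝ} (hs : 1 < s) (M : ℕ) (hM : 1 ≤ M) :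
    Z s ≤ (∑ n ∈ Finset.range M, (n:ℝ) ^ (-s)) + ((M:ℝ) - 1/2) ^ (1 - s) / (s - 1) := by
  refine (Z_summable hs).tsum_le_of_sum_range_le (f := fun n : ℕ => (n:ℝ) ^ (-s)) (fun k => ?_)
  have hM' : (1:ℝ) ≤ M := by exact_mod_cast hM
  have hk : (0:ℝ) ≤ k := Nat.cast_nonneg k
  calc ∑ n ∈ Finset.range k, (n:ℝ) ^ (-s) ≤ ∑ n ∈ Finset.range (M + k), (n:ℝ) ^ (-s) := by
        apply Finset.sum_le_sum_of_subset_of_nonneg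
        · intro n; simp; omega
        · intros; positivity
    _ ≤ _ := psum_up hs M hM k
    _ ≤ _ := by
      have : 0 ≤ ((M:ℝ) + k - 1/2) ^ (1 - s) / (s - 1) :=
        div_nonneg (Real.rpow_nonneg (by linarith) _) (by linarith)
      linarith

lemma Z_ge {s : ℝ} (hs : 1 < s) (M : ℕ) (hM : 1 ≤ M) :
    (∑ n ∈ Finset.range M, (n:ℝ) ^ (-s)) + (M:ℝ) ^ (-s) / 2 + (M:ℝ) ^ (1 - s) / (s - 1) ≤ Z s := by
  have hlim : Filter.Tendsto (fun k : ℕ => (M:ℝ) + k) Filter.atTop Filter.atTop :=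
    Filter.tendsto_atTop_add_const_left _ _ tendsto_natCast_atTop_atTop
  have h1 := (tendsto_rpow_neg_atTop (y := s) (by linarith)).comp hlim
  have h2 := (tendsto_rpow_neg_atTop (y := s - 1) (by linarith)).comp hlim
  have h3 : Filter.Tendsto (fun k : ℕ => (∑ n ∈ Finset.range M, (n:ℝ) ^ (-s)) + (M:ℝ) ^ (-s) / 2
      - ((M:ℝ) + k) ^ (-s) / 2 +
      ((M:ℝ) ^ (1 - s) / (s - 1) - ((M:ℝ) + k) ^ (-(s - 1)) / (s - 1))) Filter.atTop
      (nhds ((∑ n ∈ Finset.range M, (n:ℝ) ^ (-s)) + (M:ℝ) ^ (-s) / 2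
      - 0 / 2 + ((M:ℝ) ^ (1 - s) / (s - 1) - 0 / (s - 1)))) :=
    (tendsto_const_nhds.sub (h1.div_const 2)).add (tendsto_const_nhds.sub (h2.div_const _))
  have h4 := le_of_tendsto' h3 (b := Z s) (fun k => by
    rw [neg_sub]
    refine (psum_lo hs M hM k).trans ?_
    exact (Z_summable hs).sum_le_tsum _ (fun n _ => by positivity))
  simpa using h4

lemma Z_one_le {s : ℝ} (hs : 1 < s) : 1 ≤ Z s := by
  have := (Z_summable hs).le_tsum 1 (fun n _ => by positivity)
  simpa [Z] using this

lemma Z_crude {u : ℝ} (hu : 0 < u) : Z (1 + u) ≤ 1 + 1 / u := by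
  have h := Z_le (s := 1 + u) (by linarith) 2 (by norm_num)
  refine h.trans ?_
  have h0 : (0:ℝ) ^ (-(1 + u)) = 0 := Real.zero_rpow (by linarith)
  have h1 : ((2:ℕ):ℝ) - 1/2 = 3/2 := by norm_num
  rw [h1]
  have h2 : (3/2:ℝ) ^ (1 - (1 + u)) ≤ 1 := Real.rpow_le_one_of_one_le_of_nonpos (by norm_num) (by linarith)
  have h3 : (3/2:ℝ) ^ (1 - (1 + u)) / (1 + u - 1) ≤ 1 / u := by
    rw [show 1 + u - 1 = u by ring]; gcongr
  simp only [Finset.sum_range_succ, Finset.sum_range_zero]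
  push_cast
  rw [h0, Real.one_rpow]
  linarith

/-- the completely multiplicative function `n ↦ n^{-s}` -/
noncomputable def pwHom (s : ℝ) (hs : s ≠ 0) : ℕ →*₀ ℝ where
  toFun n := (n:ℝ) ^ (-s)
  map_zero' := by simp [Real.zero_rpow (neg_ne_zero.mpr hs)]
  map_one' := by simp
  map_mul' m n := by
    push_cast
    exact Real.mul_rpow (Nat.cast_nonneg _) (Nat.cast_nonneg _)

lemma prime_rpow_pos (p : Nat.Primes) (s : ℝ) : 0 < (p.1:ℝ) ^ (-s) :=
  Real.rpow_pos_of_pos (by exact_mod_cast p.2.pos) _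

lemma prime_rpow_lt_one (p : Nat.Primes) {s : ℝ} (hs : 0 < s) : (p.1:ℝ) ^ (-s) < 1 :=
  Real.rpow_lt_one_of_one_lt_of_neg (by exact_mod_cast p.2.one_lt) (by linarith)

lemma prime_summable {s : ℝ} (hs : 1 < s) : Summable (fun p : Nat.Primes => (p.1:ℝ) ^ (-s)) :=
  (Z_summable hs).comp_injective (f := fun n : ℕ => (n:ℝ) ^ (-s)) (i := fun p : Nat.Primes => p.1)
    Subtype.val_injective

lemma hasSum_log {s : ℝ} (hs : 1 < s) :
    HasSum (fun p : Nat.Primes => -Real.log (1 - (p.1:ℝ) ^ (-s))) (Real.log (Z s)) := by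
  have hs0 : s ≠ 0 := by linarith
  have hP : HasProd (fun p : Nat.Primes => (1 - (p.1:ℝ) ^ (-s))⁻¹) (Z s) :=
    EulerProduct.eulerProduct_completely_multiplicative_hasProd (f := pwHom s hs0)
      (by
        refine (Z_summable hs).congr (fun n => ?_)
        have : (0:ℝ) ≤ (n:ℝ) ^ (-s) := by positivity
        exact (Real.norm_of_nonneg this).symm)
  have hZ : (0:ℝ) < Z s := by linarith [Z_one_le hs]
  have hc : ContinuousAt Real.log (Z s) := Real.continuousAt_log hZ.ne'
  have := hc.tendsto.comp hP
  refine this.congr (fun T => ?_)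
  simp only [Function.comp]
  rw [Real.log_prod]
  · exact Finset.sum_congr rfl (fun p _ => by rw [Real.log_inv])
  · intro p _
    have := prime_rpow_lt_one p (s := s) (by linarith)
    exact inv_ne_zero (by linarith)

end PZ

namespace PZ

/-- `artanh` in logarithmic form -/
noncomputable def At (x : ℝ) : ℝ := -Real.log (1 - x) + Real.log (1 - x ^ 2) / 2

lemma At_eq {x : ℝ} (h0 : 0 < x) (h1 : x < 1) :
    At x = (Real.log (1 + x) - Real.log (1 - x)) / 2 := by
  have : 1 - x ^ 2 = (1 + x) * (1 - x) := by ring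
  rw [At, this, Real.log_mul (by linarith) (by linarith)]
  ring

lemma le_At {x : ℝ} (h0 : 0 < x) (h1 : x < 1) : x ≤ At x := by
  have h := Real.hasSum_log_sub_log_of_abs_lt_one (x := x) (by rw [abs_of_pos h0]; exact h1)
  have h2 := le_hasSum h 0 (fun k _ => by positivity)
  rw [At_eq h0 h1]
  norm_num at h2
  linarith

lemma At_le {x : ℝ} (h0 : 0 < x) (h1 : x ≤ 1 / 131) : At x ≤ x * (51481 / 51480) := by
  have h := Real.hasSum_log_sub_log_of_abs_lt_one (x := x) (by rw [abs_of_pos h0]; linarith)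
  have hx2 : x ^ 2 ≤ 1 / 17161 := by nlinarith
  have hg : HasSum (fun k : ℕ => (2 / 3 * x) * (x ^ 2) ^ k + (if k = 0 then 4 / 3 * x else 0))
      ((2 / 3 * x) * (1 - x ^ 2)⁻¹ + 4 / 3 * x) :=
    ((hasSum_geometric_of_lt_one (by positivity) (by linarith)).mul_left _).add
      (hasSum_ite_eq 0 (4 / 3 * x))
  have h3 := hasSum_le (fun k => ?_) h hg
  · rw [At_eq h0 (by linarith)]
    have h4 : (1 - x ^ 2)⁻¹ ≤ 17161 / 17160 := by
      rw [inv_le_comm₀ (by linarith) (by norm_num)]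
      norm_num
      linarith
    nlinarith
  · rcases Nat.eq_zero_or_pos k with rfl | hk
    · norm_num; linarith
    · have hk' : (1:ℝ) ≤ k := by exact_mod_cast hk
      rw [if_neg (by omega), add_zero, pow_succ, pow_mul]
      have h5 : (1:ℝ) / (2 * k + 1) ≤ 1 / 3 := by
        apply one_div_le_one_div_of_le <;> linarith
      have h6 : 0 ≤ (x ^ 2) ^ k * x := by positivity
      nlinarith

/-- the primes below 128 -/
def SP : Finset Nat.Primes := (Finset.range 128).subtype Nat.Prime

lemma mem_SP (p : Nat.Primes) : p ∈ SP ↔ p.1 < 128 := by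
  unfold SP
  exact (Finset.mem_subtype).trans Finset.mem_range

lemma not_mem_SP {p : Nat.Primes} (h : p ∉ SP) : 131 ≤ p.1 := by
  rw [mem_SP] at h
  by_contra hc
  have hp := p.2
  have h1 : p.1 = 128 ∨ p.1 = 129 ∨ p.1 = 130 := by omega
  rcases h1 with h1 | h1 | h1 <;> rw [h1] at hp <;> norm_num at hp

lemma sum_SP (f : ℕ → ℝ) : ∑ p ∈ SP, f p.1 = (tabP.map (fun x => f x.1)).sum := by
  have h1 : ∑ p ∈ SP, f p.1 = ∑ p ∈ (Finset.range 128).filter Nat.Prime, f p := by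
    rw [← Finset.sum_subtype_eq_sum_filter]
    rfl
  have h2 : (Finset.range 128).filter Nat.Prime = (tabP.map Prod.fst).toFinset := by decide +kernel
  have h3 : (tabP.map Prod.fst).Nodup := by decide +kernel
  rw [h1, h2, List.sum_toFinset _ h3, List.map_map]
  rfl

lemma sum_64 (f : ℕ → ℝ) : ∑ n ∈ Finset.range 64, f n = f 0 + f 1 + (tabZ.map (fun x => f x.1)).sum := by
  have h2 : Finset.range 64 = insert 0 (insert 1 (tabZ.map Prod.fst).toFinset) := by decide +kernel
  have h3 : (tabZ.map Prod.fst).Nodup := by decide +kernel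
  rw [h2, Finset.sum_insert (by decide +kernel), Finset.sum_insert (by decide +kernel),
    List.sum_toFinset _ h3, List.map_map, ← add_assoc]
  rfl

open Classical in
/-- restriction of a function to the large primes -/
noncomputable def tl (f : Nat.Primes → ℝ) (p : Nat.Primes) : ℝ := if p ∈ SP then 0 else f p

lemma tl_hasSum {f : Nat.Primes → ℝ} {a : ℝ} (h : HasSum f a) :
    HasSum (tl f) (a - ∑ p ∈ SP, f p) := by
  classical
  have h1 : HasSum (fun p => if p ∈ SP then f p else 0) (∑ p ∈ SP, (if p ∈ SP then f p else 0)) :=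
    hasSum_sum_of_ne_finset_zero (fun p hp => if_neg hp)
  have h2 : ∑ p ∈ SP, (if p ∈ SP then f p else 0) = ∑ p ∈ SP, f p :=
    Finset.sum_congr rfl (fun p hp => if_pos hp)
  rw [h2] at h1
  refine (h.sub h1).congr_fun ?_
  intro p
  unfold tl
  split_ifs <;> simp

/-- the sum of `artanh (p^{-1-u})` over the large primes -/
noncomputable def G (u : ℝ) : ℝ := Real.log (Z (1 + u)) - Real.log (Z (2 + 2 * u)) / 2
  - ∑ p ∈ SP, At ((p.1:ℝ) ^ (-(1 + u)))

lemma rpow_two (x u : ℝ) (hx : 0 ≤ x) : x ^ (-(2 + 2 * u)) = (x ^ (-(1 + u))) ^ 2 := by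
  rw [← Real.rpow_natCast, ← Real.rpow_mul hx]
  congr 1
  push_cast
  ring

lemma G_hasSum {u : ℝ} (hu : 0 < u) :
    HasSum (tl (fun p : Nat.Primes => At ((p.1:ℝ) ^ (-(1 + u))))) (G u) := by
  apply tl_hasSum
  have h1 := hasSum_log (s := 1 + u) (by linarith)
  have h2 := (hasSum_log (s := 2 + 2 * u) (by linarith)).div_const 2
  refine (h1.sub h2).congr_fun ?_
  intro p
  rw [At, rpow_two _ _ (Nat.cast_nonneg _)]
  ring

/-- tail of the prime zeta function -/
noncomputable def T (u : ℝ) : ℝ := ∑' p, tl (fun p : Nat.Primes => (p.1:ℝ) ^ (-(1 + u))) p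

lemma T_hasSum {u : ℝ} (hu : 0 < u) :
    HasSum (tl (fun p : Nat.Primes => (p.1:ℝ) ^ (-(1 + u)))) (T u) :=
  (tl_hasSum (prime_summable (s := 1 + u) (by linarith)).hasSum).summable.hasSum

lemma T_le_G {u : ℝ} (hu : 0 < u) : T u ≤ G u := by
  refine hasSum_le (fun p => ?_) (T_hasSum hu) (G_hasSum hu)
  unfold tl
  split_ifs
  · exact le_rfl
  · exact le_At (prime_rpow_pos p _) (prime_rpow_lt_one p (by linarith))

lemma G_le_T {u : ℝ} (hu : 0 < u) : G u ≤ T u * (51481 / 51480) := by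
  refine hasSum_le (fun p => ?_) (G_hasSum hu) ((T_hasSum hu).mul_right _)
  unfold tl
  split_ifs with h
  · simp
  · refine At_le (prime_rpow_pos p _) ?_
    have h1 : (131:ℝ) ≤ p.1 := by exact_mod_cast not_mem_SP h
    calc (p.1:ℝ) ^ (-(1 + u)) ≤ (p.1:ℝ) ^ (-1:ℝ) :=
          Real.rpow_le_rpow_of_exponent_le (by linarith) (by linarith)
      _ = 1 / p.1 := by rw [Real.rpow_neg_one, one_div]
      _ ≤ _ := by apply one_div_le_one_div_of_le <;> linarith

lemma T_nonneg {u : ℝ} : 0 ≤ T u := by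
  refine tsum_nonneg (fun p => ?_)
  unfold tl
  split_ifs
  · exact le_rfl
  · exact (prime_rpow_pos p _).le

lemma T_crude {u : ℝ} (hu : 0 < u) : T u ≤ u - Real.log u := by
  have h1 : T u ≤ Real.log (Z (1 + u)) := by
    refine hasSum_le (fun p => ?_) (T_hasSum hu) (hasSum_log (s := 1 + u) (by linarith))
    have hp := prime_rpow_pos p (1 + u)
    have hp1 := prime_rpow_lt_one p (s := 1 + u) (by linarith)
    have := Real.log_le_sub_one_of_pos (x := 1 - (p.1:ℝ) ^ (-(1 + u))) (by linarith)
    unfold tl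
    split_ifs <;> linarith
  refine h1.trans ?_
  have h2 : Real.log (Z (1 + u)) ≤ Real.log ((1 + u) / u) := by
    apply Real.log_le_log (by linarith [Z_one_le (s := 1 + u) (by linarith)])
    refine (Z_crude hu).trans (le_of_eq ?_)
    field_simp
    ring
  rw [Real.log_div (by linarith) hu.ne'] at h2
  have := Real.log_le_sub_one_of_pos (x := 1 + u) (by linarith)
  linarith

end PZ

namespace PZ

lemma rpow_exp {x : ℝ} (hx : 0 < x) (u : ℝ) : x ^ (-(1 + u)) = Real.exp (-(u * Real.log x)) / x := by
  rw [Real.rpow_def_of_pos hx]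
  have : Real.log x * -(1 + u) = -(u * Real.log x) - Real.log x := by ring
  rw [this, Real.exp_sub, Real.exp_log hx]

lemma q_lo (x : ℕ × ℕ) (h : entryOk x = true) (a : ℕ) :
    ((pwLo x.2 a : ℕ):ℝ) / D / x.1 ≤ (x.1:ℝ) ^ (-(1 + (a:ℝ) / Du)) := by
  obtain ⟨h1, h2, h3⟩ := entry_sound x h
  have hx : (0:ℝ) < x.1 := by exact_mod_cast h1
  rw [rpow_exp hx]
  exact div_le_div_of_nonneg_right (pwLo_le _ _ _ h3) hx.le

lemma q_hi (x : ℕ × ℕ) (h : entryOk x = true) (a : ℕ) :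
    (x.1:ℝ) ^ (-(1 + (a:ℝ) / Du)) ≤ ((pwHi x.2 a : ℕ):ℝ) / D / x.1 := by
  obtain ⟨h1, h2, h3⟩ := entry_sound x h
  have hx : (0:ℝ) < x.1 := by exact_mod_cast h1
  rw [rpow_exp hx]
  exact div_le_div_of_nonneg_right (pwHi_ge _ _ _ h2) hx.le

lemma sumLo_le (a : ℕ) (l : List (ℕ × ℕ)) (h : ∀ x ∈ l, entryOk x = true) :
    ((sumLo a l : ℕ):ℝ) / D ≤ (l.map (fun x => (x.1:ℝ) ^ (-(1 + (a:ℝ) / Du)))).sum := by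
  have hD := Dpos
  induction l with
  | nil => simp [sumLo]
  | cons x r ih =>
    have h1 := ih (fun y hy => h y (List.mem_cons_of_mem _ hy))
    have h2 := q_lo x (h x List.mem_cons_self) a
    have h3 := div_dn (pwLo x.2 a) x.1
    rw [sumLo, List.map_cons, List.sum_cons]
    push_cast
    rw [add_div]
    refine add_le_add (le_trans ?_ h2) h1
    rw [div_right_comm]
    exact div_le_div_of_nonneg_right h3 hD.le

lemma sumHi_ge (a : ℕ) (l : List (ℕ × ℕ)) (h : ∀ x ∈ l, entryOk x = true) :
    (l.map (fun x => (x.1:ℝ) ^ (-(1 + (a:ℝ) / Du)))).sum ≤ ((sumHi a l : ℕ):ℝ) / D := by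
  have hD := Dpos
  induction l with
  | nil => simp [sumHi]
  | cons x r ih =>
    have h1 := ih (fun y hy => h y (List.mem_cons_of_mem _ hy))
    have h2 := q_hi x (h x List.mem_cons_self) a
    have h3 := div_up (pwHi x.2 a) x.1
    rw [sumHi, List.map_cons, List.sum_cons]
    push_cast
    rw [add_div]
    refine add_le_add (le_trans h2 ?_) h1
    rw [div_right_comm]
    exact div_le_div_of_nonneg_right h3 hD.le

lemma sq2Lo_le (a : ℕ) (l : List (ℕ × ℕ)) (h : ∀ x ∈ l, entryOk x = true) :
    ((sq2Lo a l : ℕ):ℝ) / D ≤ (l.map (fun x => (x.1:ℝ) ^ (-(2 + 2 * ((a:ℝ) / Du))))).sum := by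
  have hD := Dpos
  induction l with
  | nil => simp [sq2Lo]
  | cons x r ih =>
    have h1 := ih (fun y hy => h y (List.mem_cons_of_mem _ hy))
    have h2 := q_lo x (h x List.mem_cons_self) a
    have h3 := div_dn (pwLo x.2 a) x.1
    have h4 := div_dn ((pwLo x.2 a / x.1) ^ 2) D
    rw [sq2Lo, List.map_cons, List.sum_cons]
    push_cast [-Nat.cast_div_charZero]
    rw [add_div]
    refine add_le_add ?_ h1
    rw [rpow_two _ _ (Nat.cast_nonneg _)]
    have h5 : ((pwLo x.2 a / x.1 : ℕ):ℝ) / D ≤ (x.1:ℝ) ^ (-(1 + (a:ℝ) / Du)) := by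
      refine le_trans ?_ h2
      rw [div_right_comm]
      exact div_le_div_of_nonneg_right h3 hD.le
    refine le_trans (div_le_div_of_nonneg_right h4 hD.le) ?_
    refine le_trans (le_of_eq ?_) (pow_le_pow_left₀ (by positivity) h5 2)
    push_cast [-Nat.cast_div_charZero]
    field_simp

lemma sq2Hi_ge (a : ℕ) (l : List (ℕ × ℕ)) (h : ∀ x ∈ l, entryOk x = true) :
    (l.map (fun x => (x.1:ℝ) ^ (-(2 + 2 * ((a:ℝ) / Du))))).sum ≤ ((sq2Hi a l : ℕ):ℝ) / D := by
  have hD := Dpos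
  induction l with
  | nil => simp [sq2Hi]
  | cons x r ih =>
    have h1 := ih (fun y hy => h y (List.mem_cons_of_mem _ hy))
    have h2 := q_hi x (h x List.mem_cons_self) a
    have h3 := div_up (pwHi x.2 a) x.1
    have h4 := div_up ((pwHi x.2 a / x.1 + 1) ^ 2) D
    rw [sq2Hi, List.map_cons, List.sum_cons]
    rw [Nat.cast_add, add_div, Nat.cast_add, Nat.cast_one]
    refine add_le_add ?_ h1
    rw [rpow_two _ _ (Nat.cast_nonneg _)]
    have h5 : (x.1:ℝ) ^ (-(1 + (a:ℝ) / Du)) ≤ (((pwHi x.2 a / x.1 : ℕ):ℝ) + 1) / D := by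
      refine le_trans h2 ?_
      rw [div_right_comm]
      exact div_le_div_of_nonneg_right h3 hD.le
    refine le_trans ?_ (div_le_div_of_nonneg_right h4 hD.le)
    refine le_trans (pow_le_pow_left₀ (by positivity) h5 2) (le_of_eq ?_)
    push_cast [-Nat.cast_div_charZero]
    field_simp

lemma rpow_exp0 {x : ℝ} (hx : 0 < x) (u : ℝ) : x ^ (1 - (1 + u)) = Real.exp (-(u * Real.log x)) := by
  rw [Real.rpow_def_of_pos hx]
  congr 1; ring

lemma rpow_exp1 {x : ℝ} (hx : 0 < x) (u : ℝ) :
    x ^ (1 - (2 + 2 * u)) = Real.exp (-(u * Real.log x)) ^ 2 / x := by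
  rw [Real.rpow_def_of_pos hx]
  have : Real.log x * (1 - (2 + 2 * u)) = -(u * Real.log x) + -(u * Real.log x) - Real.log x := by ring
  rw [this, Real.exp_sub, Real.exp_log hx, Real.exp_add, sq]

lemma base_sum (s : ℝ) (hs : 0 < s) : ∑ n ∈ Finset.range 64, (n:ℝ) ^ (-s) =
    1 + (tabZ.map (fun x => (x.1:ℝ) ^ (-s))).sum := by
  rw [sum_64 (fun n => (n:ℝ) ^ (-s))]
  rw [Nat.cast_zero, Real.zero_rpow (by linarith), Nat.cast_one, Real.one_rpow, zero_add]

lemma u_pos {a : ℕ} (ha : 1 ≤ a) : (0:ℝ) < (a:ℝ) / Du := by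
  have : (0:ℝ) < a := by exact_mod_cast ha
  exact div_pos this Dupos

lemma ZLo_le {a : ℕ} (ha : 1 ≤ a) : ((ZLo a : ℕ):ℝ) / D ≤ Z (1 + (a:ℝ) / Du) := by
  have hD := Dpos
  have hDu := Dupos
  have ha' : (0:ℝ) < a := by exact_mod_cast ha
  have hu := u_pos ha
  obtain ⟨hZ, -, h64, -⟩ := tab_sound
  refine le_trans ?_ (Z_ge (s := 1 + (a:ℝ) / Du) (by linarith) 64 (by norm_num))
  rw [base_sum _ (by linarith)]
  have h1 := sumLo_le a tabZ hZ
  have h2 := q_lo _ h64 a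
  obtain ⟨-, -, h3⟩ := entry_sound _ h64
  have h4 := pwLo_le l64 a _ h3
  rw [rpow_exp0 (by norm_num)]
  simp only [] at h2 h4
  unfold ZLo
  rw [Nat.cast_add, Nat.cast_add, Nat.cast_add, add_div, add_div, add_div, div_self hD.ne']
  have h5 := div_dn (pwLo l64 a) 128
  have h6 := div_dn (pwLo l64 a * Du) a
  refine add_le_add (add_le_add (add_le_add le_rfl h1) ?_) ?_
  · refine le_trans (div_le_div_of_nonneg_right h5 hD.le) ?_
    refine le_trans (le_of_eq ?_) (div_le_div_of_nonneg_right h2 (by norm_num : (0:ℝ) ≤ 2))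
    push_cast; field_simp; ring
  · refine le_trans (div_le_div_of_nonneg_right h6 hD.le) ?_
    have : (1 + (a:ℝ) / Du - 1) = a / Du := by ring
    rw [this]
    refine le_trans (le_of_eq ?_) (div_le_div_of_nonneg_right h4 hu.le)
    push_cast; field_simp

lemma ZHi_ge {a : ℕ} (ha : 1 ≤ a) : Z (1 + (a:ℝ) / Du) ≤ ((ZHi a : ℕ):ℝ) / D := by
  have hD := Dpos
  have hDu := Dupos
  have ha' : (0:ℝ) < a := by exact_mod_cast ha
  have hu := u_pos ha
  obtain ⟨hZ, -, -, hH⟩ := tab_sound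
  refine le_trans (Z_le (s := 1 + (a:ℝ) / Du) (by linarith) 64 (by norm_num)) ?_
  rw [base_sum _ (by linarith)]
  have h1 := sumHi_ge a tabZ hZ
  have h4 := pwHi_ge lH a _ hH
  have h7 : (((64:ℕ):ℝ) - 1 / 2) = 127 / 2 := by norm_num
  rw [h7, rpow_exp0 (by norm_num)]
  unfold ZHi
  rw [Nat.cast_add, Nat.cast_add, Nat.cast_add, Nat.cast_one, add_div, add_div, div_self hD.ne']
  have h6 := div_up (pwHi lH a * Du) a
  refine add_le_add (add_le_add le_rfl h1) ?_
  refine le_trans ?_ (div_le_div_of_nonneg_right h6 hD.le)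
  have : (1 + (a:ℝ) / Du - 1) = a / Du := by ring
  rw [this]
  refine le_trans (div_le_div_of_nonneg_right h4 hu.le) (le_of_eq ?_)
  push_cast; field_simp

lemma Z2Lo_le {a : ℕ} (ha : 1 ≤ a) : ((Z2Lo a : ℕ):ℝ) / D ≤ Z (2 + 2 * ((a:ℝ) / Du)) := by
  have hD := Dpos
  have hDu := Dupos
  have ha' : (0:ℝ) < a := by exact_mod_cast ha
  have hu := u_pos ha
  obtain ⟨hZ, -, h64, -⟩ := tab_sound
  refine le_trans ?_ (Z_ge (s := 2 + 2 * ((a:ℝ) / Du)) (by linarith) 64 (by norm_num))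
  rw [base_sum _ (by linarith)]
  have h1 := sq2Lo_le a tabZ hZ
  obtain ⟨-, -, h3⟩ := entry_sound _ h64
  have h4 := pwLo_le l64 a _ h3
  rw [rpow_exp1 (by norm_num), rpow_two _ _ (by norm_num), rpow_exp (by norm_num)]
  simp only [] at h4
  have h7 := pow_le_pow_left₀ (by positivity) h4 2
  unfold Z2Lo
  rw [Nat.cast_add, Nat.cast_add, Nat.cast_add, add_div, add_div, add_div, div_self hD.ne']
  have h5 := div_dn ((pwLo l64 a) ^ 2) (D * 8192)
  have h6 := div_dn ((pwLo l64 a) ^ 2 * Du) (D * 64 * (Du + 2 * a))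
  refine add_le_add (add_le_add (add_le_add le_rfl h1) ?_) ?_
  · refine le_trans (div_le_div_of_nonneg_right h5 hD.le) ?_
    refine le_trans (le_of_eq ?_) (le_trans (div_le_div_of_nonneg_right h7 (by norm_num : (0:ℝ) ≤ 8192)) (le_of_eq ?_))
    · push_cast; field_simp
    · push_cast; field_simp; norm_num
  · refine le_trans (div_le_div_of_nonneg_right h6 hD.le) ?_
    have : (2 + 2 * ((a:ℝ) / Du) - 1) = (Du + 2 * a) / Du := by field_simp; ring
    rw [this]
    refine le_trans (le_of_eq ?_) (div_le_div_of_nonneg_right (div_le_div_of_nonneg_right h7 (by norm_num)) (by positivity))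
    push_cast; field_simp

lemma Z2Hi_ge {a : ℕ} (ha : 1 ≤ a) : Z (2 + 2 * ((a:ℝ) / Du)) ≤ ((Z2Hi a : ℕ):ℝ) / D := by
  have hD := Dpos
  have hDu := Dupos
  have ha' : (0:ℝ) < a := by exact_mod_cast ha
  have hu := u_pos ha
  obtain ⟨hZ, -, -, hH⟩ := tab_sound
  refine le_trans (Z_le (s := 2 + 2 * ((a:ℝ) / Du)) (by linarith) 64 (by norm_num)) ?_
  rw [base_sum _ (by linarith)]
  have h1 := sq2Hi_ge a tabZ hZ
  have h4 := pwHi_ge lH a _ hH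
  have h7 : (((64:ℕ):ℝ) - 1 / 2) = 127 / 2 := by norm_num
  rw [h7, rpow_exp1 (by norm_num)]
  have h8 := pow_le_pow_left₀ (by positivity) h4 2
  unfold Z2Hi
  rw [Nat.cast_add, Nat.cast_add, Nat.cast_add, Nat.cast_one, add_div, add_div, div_self hD.ne']
  have h6 := div_up ((pwHi lH a) ^ 2 * 2 * Du) (D * 127 * (Du + 2 * a))
  refine add_le_add (add_le_add le_rfl h1) ?_
  refine le_trans ?_ (div_le_div_of_nonneg_right h6 hD.le)
  have : (2 + 2 * ((a:ℝ) / Du) - 1) = (Du + 2 * a) / Du := by field_simp; ring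
  rw [this]
  refine le_trans (div_le_div_of_nonneg_right (div_le_div_of_nonneg_right h8 (by norm_num)) (by positivity)) (le_of_eq ?_)
  push_cast; field_simp

noncomputable def Pr (u : ℝ) (l : List (ℕ × ℕ)) : ℝ :=
  Real.exp (-2 * (l.map (fun x => At ((x.1:ℝ) ^ (-(1 + u))))).sum)

lemma exp_At {x : ℝ} (h0 : 0 < x) (h1 : x < 1) : Real.exp (-2 * At x) = (1 - x) / (1 + x) := by
  rw [At_eq h0 h1]
  have : -2 * ((Real.log (1 + x) - Real.log (1 - x)) / 2) = Real.log (1 - x) - Real.log (1 + x) := by ring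
  rw [this, Real.exp_sub, Real.exp_log (by linarith), Real.exp_log (by linarith)]

lemma ratio_anti {x y : ℝ} (hx : 0 ≤ x) (hxy : x ≤ y) : (1 - y) / (1 + y) ≤ (1 - x) / (1 + x) := by
  rw [div_le_div_iff₀ (by linarith) (by linarith)]
  nlinarith

lemma Pr_cons (u : ℝ) (hu : 0 < u) (x : ℕ × ℕ) (hx : 2 ≤ x.1) (r : List (ℕ × ℕ)) :
    Pr u (x :: r) = (1 - (x.1:ℝ) ^ (-(1 + u))) / (1 + (x.1:ℝ) ^ (-(1 + u))) * Pr u r := by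
  have h2 : (2:ℝ) ≤ x.1 := by exact_mod_cast hx
  have h0 : 0 < (x.1:ℝ) ^ (-(1 + u)) := Real.rpow_pos_of_pos (by linarith) _
  have h1 : (x.1:ℝ) ^ (-(1 + u)) < 1 := Real.rpow_lt_one_of_one_lt_of_neg (by linarith) (by linarith)
  rw [Pr, List.map_cons, List.sum_cons, mul_add, Real.exp_add, exp_At h0 h1, Pr]

lemma pLo_le {a : ℕ} (ha : 1 ≤ a) (l : List (ℕ × ℕ)) (h : ∀ x ∈ l, entryOk x = true)
    (h2 : ∀ x ∈ l, 2 ≤ x.1) : ((pLo a l : ℕ):ℝ) / D ≤ Pr ((a:ℝ) / Du) l := by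
  have hD := Dpos
  have hu := u_pos ha
  induction l with
  | nil => rw [pLo, div_self hD.ne']; simp [Pr]
  | cons x r ih =>
    have h1 := ih (fun y hy => h y (List.mem_cons_of_mem _ hy)) (fun y hy => h2 y (List.mem_cons_of_mem _ hy))
    have hq := q_hi x (h x List.mem_cons_self) a
    have hx := h2 x List.mem_cons_self
    have hx' : (0:ℝ) < x.1 := by exact_mod_cast (by omega : 0 < x.1)
    rw [Pr_cons _ hu _ hx, pLo]
    have hP : 0 ≤ Pr ((a:ℝ) / Du) r := (Real.exp_pos _).le
    have hq0 : 0 < (x.1:ℝ) ^ (-(1 + (a:ℝ) / Du)) := Real.rpow_pos_of_pos hx' _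
    have hq1 : (x.1:ℝ) ^ (-(1 + (a:ℝ) / Du)) < 1 :=
      Real.rpow_lt_one_of_one_lt_of_neg (by exact_mod_cast hx) (by linarith)
    have hr := ratio_anti hq0.le hq
    have h5 := div_dn (pLo a r * (x.1 * D - pwHi x.2 a)) (x.1 * D + pwHi x.2 a)
    refine le_trans (div_le_div_of_nonneg_right h5 hD.le) ?_
    rcases le_or_gt (pwHi x.2 a) (x.1 * D) with hc | hc
    · rw [Nat.cast_mul, Nat.cast_sub hc]
      have hc' : ((pwHi x.2 a : ℕ):ℝ) ≤ x.1 * D := by exact_mod_cast hc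
      have e1 : (1 - ((pwHi x.2 a : ℕ):ℝ) / D / x.1) / (1 + ((pwHi x.2 a : ℕ):ℝ) / D / x.1)
          = (x.1 * D - pwHi x.2 a) / (x.1 * D + pwHi x.2 a) := by
        field_simp
      rw [e1] at hr
      refine le_trans (le_of_eq ?_) (mul_le_mul hr h1 (by positivity) ?_)
      · push_cast; field_simp
      · exact div_nonneg (by linarith) (by linarith)
    · rw [Nat.sub_eq_zero_of_le hc.le, mul_zero, Nat.cast_zero, zero_div, zero_div]
      exact mul_nonneg (div_nonneg (by linarith) (by linarith)) hP

lemma pHi_ge {a : ℕ} (ha : 1 ≤ a) (l : List (ℕ × ℕ)) (h : ∀ x ∈ l, entryOk x = true)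
    (h2 : ∀ x ∈ l, 2 ≤ x.1) : Pr ((a:ℝ) / Du) l ≤ ((pHi a l : ℕ):ℝ) / D := by
  have hD := Dpos
  have hu := u_pos ha
  induction l with
  | nil => rw [pHi, div_self hD.ne']; simp [Pr]
  | cons x r ih =>
    have h1 := ih (fun y hy => h y (List.mem_cons_of_mem _ hy)) (fun y hy => h2 y (List.mem_cons_of_mem _ hy))
    have hq := q_lo x (h x List.mem_cons_self) a
    have hx := h2 x List.mem_cons_self
    have hx' : (0:ℝ) < x.1 := by exact_mod_cast (by omega : 0 < x.1)
    rw [Pr_cons _ hu _ hx, pHi]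
    have hP : 0 ≤ Pr ((a:ℝ) / Du) r := (Real.exp_pos _).le
    have hq1 : (x.1:ℝ) ^ (-(1 + (a:ℝ) / Du)) < 1 :=
      Real.rpow_lt_one_of_one_lt_of_neg (by exact_mod_cast hx) (by linarith)
    have hr := ratio_anti (by positivity) hq
    have h5 := div_up (pHi a r * (x.1 * D - pwLo x.2 a)) (x.1 * D + pwLo x.2 a)
    rw [Nat.cast_add, Nat.cast_one]
    refine le_trans ?_ (div_le_div_of_nonneg_right h5 hD.le)
    have hc' : ((pwLo x.2 a : ℕ):ℝ) ≤ x.1 * D := by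
      have := hq.trans hq1.le
      rw [div_div, div_le_one (by positivity)] at this
      linarith
    have hc : pwLo x.2 a ≤ x.1 * D := by exact_mod_cast hc'
    rw [Nat.cast_mul, Nat.cast_sub hc]
    have e1 : (1 - ((pwLo x.2 a : ℕ):ℝ) / D / x.1) / (1 + ((pwLo x.2 a : ℕ):ℝ) / D / x.1)
        = (x.1 * D - pwLo x.2 a) / (x.1 * D + pwLo x.2 a) := by
      field_simp
    rw [e1] at hr
    refine le_trans (mul_le_mul hr h1 hP ?_) (le_of_eq ?_)
    · exact div_nonneg (by linarith) (by positivity)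
    · push_cast; field_simp

lemma tabP_two : ∀ x ∈ tabP, 2 ≤ x.1 := by
  decide +kernel

lemma G_exp {u : ℝ} (hu : 0 < u) : Real.exp (2 * G u) * Z (2 + 2 * u) = Z (1 + u) ^ 2 * Pr u tabP := by
  have h1 := Z_one_le (s := 1 + u) (by linarith)
  have h2 := Z_one_le (s := 2 + 2 * u) (by linarith)
  have : 2 * G u = Real.log (Z (1 + u)) + Real.log (Z (1 + u)) - Real.log (Z (2 + 2 * u)) +
      (-2 * ∑ p ∈ SP, At ((p.1:ℝ) ^ (-(1 + u)))) := by rw [G]; ring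
  rw [this, Real.exp_add, Real.exp_sub, Real.exp_add, Real.exp_log (by linarith), Real.exp_log (by linarith),
    Pr, sum_SP (fun n => At ((n:ℝ) ^ (-(1 + u))))]
  have h3 : Z (2 + 2 * u) ≠ 0 := by linarith
  generalize Z (2 + 2 * u) = z at h3
  field_simp

lemma core_lo {x g z2 z1 P e d b c : ℝ} (h1 : Real.exp x ≤ e) (h2 : z2 ≤ d) (h3 : 1 ≤ z2)
    (h4 : b ≤ z1) (h5 : 0 ≤ b) (h6 : c ≤ P) (h7 : 0 ≤ c) (h8 : e * d ≤ b ^ 2 * c)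
    (h9 : Real.exp (2 * g) * z2 = z1 ^ 2 * P) : x ≤ 2 * g := by
  have h : Real.exp x * z2 ≤ Real.exp (2 * g) * z2 := by
    rw [h9]
    refine le_trans (mul_le_mul h1 h2 (by linarith) ((Real.exp_pos x).le.trans h1)) (h8.trans ?_)
    exact mul_le_mul (pow_le_pow_left₀ h5 h4 2) h6 h7 (by positivity)
  exact Real.exp_le_exp.mp (le_of_mul_le_mul_right h (by linarith))

lemma core_hi {x g z2 z1 P e d b c : ℝ} (h1 : e ≤ Real.exp x) (h2 : d ≤ z2) (h3 : 1 ≤ z2)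
    (h4 : z1 ≤ b) (h5 : 0 ≤ z1) (h6 : P ≤ c) (h7 : 0 ≤ P) (hd : 0 ≤ d) (h8 : b ^ 2 * c ≤ e * d)
    (h9 : Real.exp (2 * g) * z2 = z1 ^ 2 * P) : 2 * g ≤ x := by
  have h : Real.exp (2 * g) * z2 ≤ Real.exp x * z2 := by
    rw [h9]
    refine le_trans ?_ (le_trans h8 (mul_le_mul h1 h2 hd (Real.exp_pos x).le))
    exact mul_le_mul (pow_le_pow_left₀ h5 h4 2) h6 h7 (by positivity)
  exact Real.exp_le_exp.mp (le_of_mul_le_mul_right h (by linarith))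

lemma cast_lo {e d b c d0 : ℕ} (h : (0:ℝ) < d0) (h2 : e * d * d0 ≤ b ^ 2 * c) :
    ((e:ℝ) / d0) * (d / d0) ≤ ((b:ℝ) / d0) ^ 2 * (c / d0) := by
  have h3 : ((e * d * d0 : ℕ):ℝ) ≤ ((b ^ 2 * c : ℕ):ℝ) := by exact_mod_cast h2
  push_cast at h3
  rw [div_mul_div_comm, div_pow, div_mul_div_comm, div_le_div_iff₀ (by positivity) (by positivity)]
  have := mul_le_mul_of_nonneg_right h3 (by positivity : (0:ℝ) ≤ d0 ^ 2)
  linarith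

lemma cast_hi {e d b c d0 : ℕ} (h : (0:ℝ) < d0) (h2 : b ^ 2 * c ≤ e * d * d0) :
    ((b:ℝ) / d0) ^ 2 * (c / d0) ≤ ((e:ℝ) / d0) * (d / d0) := by
  have h3 : ((b ^ 2 * c : ℕ):ℝ) ≤ ((e * d * d0 : ℕ):ℝ) := by exact_mod_cast h2
  push_cast at h3
  rw [div_mul_div_comm, div_pow, div_mul_div_comm, div_le_div_iff₀ (by positivity) (by positivity)]
  have := mul_le_mul_of_nonneg_right h3 (by positivity : (0:ℝ) ≤ d0 ^ 2)
  linarith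

lemma quot_nonneg (m n : ℕ) : (0:ℝ) ≤ (m:ℝ) / n := by positivity

lemma cast_two (L v d : ℕ) : ((2 * L * v : ℕ):ℝ) / d = 2 * (L * v / d) := by push_cast; ring

lemma nodeLo_sound {a L : ℕ} (h : nodeLo a L = true) : 1 ≤ a ∧ (L:ℝ) * V / D ≤ G ((a:ℝ) / Du) := by
  have hD := Dpos
  unfold nodeLo at h
  rw [Bool.and_eq_true] at h
  have ha : 1 ≤ a := Nat.le_of_ble_eq_true h.1
  refine ⟨ha, ?_⟩
  have hu := u_pos ha
  rw [Bool.or_eq_true, Bool.and_eq_true] at h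
  rcases h.2 with h | ⟨h1, h2⟩
  · have h := Nat.le_of_ble_eq_true h
    obtain rfl : L = 0 := by omega
    simp only [Nat.cast_zero, zero_mul, zero_div]
    exact T_nonneg.trans (T_le_G hu)
  · have h1 := Nat.le_of_ble_eq_true h1
    have h2 := Nat.le_of_ble_eq_true h2
    have h10 := core_lo (expHi_ge _ h1) (Z2Hi_ge ha) (Z_one_le (by linarith)) (ZLo_le ha)
      (quot_nonneg _ _) (pLo_le ha tabP tab_sound.2.1 tabP_two) (quot_nonneg _ _)
      (cast_lo hD h2) (G_exp hu)
    rw [cast_two] at h10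
    exact le_of_mul_le_mul_left h10 two_pos

lemma nodeHi_sound {a L : ℕ} (h : nodeHi a L = true) : 1 ≤ a ∧ G ((a:ℝ) / Du) ≤ (L:ℝ) * V / D := by
  have hD := Dpos
  unfold nodeHi at h
  rw [Bool.and_eq_true] at h
  have ha : 1 ≤ a := Nat.le_of_ble_eq_true h.1
  refine ⟨ha, ?_⟩
  have hu := u_pos ha
  have h2 := Nat.le_of_ble_eq_true h.2
  have h10 := core_hi (expLo_le (2 * L * V)) (Z2Lo_le ha) (Z_one_le (by linarith)) (ZHi_ge ha)
    (zero_le_one.trans (Z_one_le (by linarith))) (pHi_ge ha tabP tab_sound.2.1 tabP_two)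
    (Real.exp_pos _).le (quot_nonneg _ _) (cast_hi hD h2) (G_exp hu)
  rw [cast_two] at h10
  exact le_of_mul_le_mul_left h10 two_pos

end PZ

namespace PZ

lemma gauss_coef {q : ℝ} (h0 : 0 ≤ q) (h1 : q ≤ 3 / 5) (n : ℕ) :
    5 / 9 * q ^ (n + 1) * (2 * ((n:ℝ) + 1) + 1) ≤ 1 := by
  induction n with
  | zero => norm_num; linarith
  | succ k ih =>
    have hk : 0 ≤ q ^ (k + 1) := by positivity
    have : (2 * (((k + 1 : ℕ):ℝ) + 1) + 1) * q ≤ 2 * ((k:ℝ) + 1) + 1 := by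
      push_cast
      have hk0 : (0:ℝ) ≤ k := Nat.cast_nonneg k
      nlinarith
    calc 5 / 9 * q ^ (k + 1 + 1) * (2 * (((k + 1 : ℕ):ℝ) + 1) + 1)
        = 5 / 9 * q ^ (k + 1) * ((2 * (((k + 1 : ℕ):ℝ) + 1) + 1) * q) := by ring
      _ ≤ 5 / 9 * q ^ (k + 1) * (2 * ((k:ℝ) + 1) + 1) := by gcongr
      _ ≤ 1 := ih

lemma gauss_sinh {r z : ℝ} (hr : r ^ 2 ≤ 3 / 5) (hz : 0 ≤ z) :
    z * (4 / 9 + 5 / 9 * Real.cosh (r * z)) ≤ Real.sinh z := by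
  have h1 := Real.hasSum_sinh z
  have h2 := Real.hasSum_cosh (r * z)
  have h3 : HasSum (fun n : ℕ => if n = 0 then (4 / 9 : ℝ) else 0) (4 / 9) := hasSum_ite_eq 0 _
  have h4 := (h3.add (h2.mul_left (5 / 9))).mul_left z
  refine hasSum_le (fun n => ?_) h4 h1
  cases n with
  | zero => norm_num
  | succ n =>
    have hc := gauss_coef (sq_nonneg r) hr n
    have hf : (0:ℝ) < ((2 * (n + 1)).factorial : ℝ) := by positivity
    rw [if_neg (Nat.succ_ne_zero n), zero_add, mul_pow, pow_mul r, Nat.factorial_succ]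
    push_cast
    have hpos : (0:ℝ) < 2 * ((n:ℝ) + 1) + 1 := by positivity
    have e : z * (5 / 9 * ((r ^ 2) ^ (n + 1) * z ^ (2 * (n + 1)) / ((2 * (n + 1)).factorial : ℝ)))
        = (5 / 9 * (r ^ 2) ^ (n + 1) * (2 * ((n:ℝ) + 1) + 1)) *
          (z ^ (2 * (n + 1) + 1) / ((2 * ((n:ℝ) + 1) + 1) * ((2 * (n + 1)).factorial : ℝ))) := by
      field_simp
      ring
    rw [e]
    exact mul_le_of_le_one_left (by positivity) hc

lemma lob_coef {q : ℝ} (h1 : 1 / 5 ≤ q) (n : ℕ) :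
    6 ≤ (1 + 5 * q ^ n) * (2 * (n:ℝ) + 1) := by
  match n with
  | 0 => norm_num
  | 1 => norm_num; linarith
  | 2 => norm_num; nlinarith
  | k + 3 =>
    have h : 0 ≤ q ^ (k + 3) := pow_nonneg (by linarith) _
    have hk : (0:ℝ) ≤ k := Nat.cast_nonneg k
    push_cast
    nlinarith [mul_nonneg h hk]

lemma lob_sinh {r z : ℝ} (hr : 1 / 5 ≤ r ^ 2) (hz : 0 ≤ z) :
    Real.sinh z ≤ z * (1 / 6 * Real.cosh z + 5 / 6 * Real.cosh (r * z)) := by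
  have h1 := Real.hasSum_sinh z
  have h2 := Real.hasSum_cosh (r * z)
  have h3 := Real.hasSum_cosh z
  have h4 := ((h3.mul_left (1 / 6)).add (h2.mul_left (5 / 6))).mul_left z
  refine hasSum_le (fun n => ?_) h1 h4
  have hc := lob_coef hr n
  have hf : (0:ℝ) < ((2 * n).factorial : ℝ) := by positivity
  rw [mul_pow, pow_mul r, Nat.factorial_succ]
  push_cast
  have hpos : (0:ℝ) < 2 * (n:ℝ) + 1 := by positivity
  have e : z * (1 / 6 * (z ^ (2 * n) / ((2 * n).factorial : ℝ)) +
      5 / 6 * ((r ^ 2) ^ n * z ^ (2 * n) / ((2 * n).factorial : ℝ)))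
      = ((1 + 5 * (r ^ 2) ^ n) * (2 * (n:ℝ) + 1) / 6) *
        (z ^ (2 * n + 1) / ((2 * (n:ℝ) + 1) * ((2 * n).factorial : ℝ))) := by
    field_simp
    ring
  rw [e]
  exact le_mul_of_one_le_left (by positivity) (by linarith)

lemma exp_pm (m d y : ℝ) : Real.exp (-((m - d) * y)) = Real.exp (-(m * y)) * Real.exp (d * y) ∧
    Real.exp (-((m + d) * y)) = Real.exp (-(m * y)) * Real.exp (-(d * y)) := by
  constructor <;> rw [← Real.exp_add] <;> congr 1 <;> ring

lemma gauss_panel {r m h y : ℝ} (hr : r ^ 2 ≤ 3 / 5) (hh : 0 ≤ h) (hy : 0 < y) :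
    h * (5 / 9 * Real.exp (-((m - r * h) * y)) + 8 / 9 * Real.exp (-(m * y)) +
      5 / 9 * Real.exp (-((m + r * h) * y))) ≤
    Real.exp (-((m - h) * y)) / y - Real.exp (-((m + h) * y)) / y := by
  have h1 := gauss_sinh hr (mul_nonneg hh hy.le)
  rw [(exp_pm m (r * h) y).1, (exp_pm m (r * h) y).2, (exp_pm m h y).1, (exp_pm m h y).2]
  rw [Real.cosh_eq, Real.sinh_eq, ← mul_assoc r h y] at h1
  rw [← sub_div, le_div_iff₀ hy]
  have h2 := mul_le_mul_of_nonneg_left h1 (Real.exp_pos (-(m * y))).le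
  linarith

lemma lob_panel {r m h y : ℝ} (hr : 1 / 5 ≤ r ^ 2) (hh : 0 ≤ h) (hy : 0 < y) :
    Real.exp (-((m - h) * y)) / y - Real.exp (-((m + h) * y)) / y ≤
    h * (1 / 6 * Real.exp (-((m - h) * y)) + 5 / 6 * Real.exp (-((m - r * h) * y)) +
      5 / 6 * Real.exp (-((m + r * h) * y)) + 1 / 6 * Real.exp (-((m + h) * y))) := by
  have h1 := lob_sinh hr (mul_nonneg hh hy.le)
  rw [(exp_pm m (r * h) y).1, (exp_pm m (r * h) y).2, (exp_pm m h y).1, (exp_pm m h y).2]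
  rw [Real.cosh_eq, Real.cosh_eq, Real.sinh_eq, ← mul_assoc r h y] at h1
  rw [← sub_div, div_le_iff₀ hy]
  have h2 := mul_le_mul_of_nonneg_left h1 (Real.exp_pos (-(m * y))).le
  linarith

noncomputable def QL (g : ℝ → ℝ) : ℕ → List (ℕ × ℕ × ℕ × ℕ) → ℝ
  | _, [] => 0
  | a, x :: r => ((x.1:ℝ) - a) / (2 * S) * (5 / 9 * g ((nLo1 a x.1 : ℕ) / Du) +
      8 / 9 * g ((nMid a x.1 : ℕ) / Du) + 5 / 9 * g ((nLo3 a x.1 : ℕ) / Du)) + QL g x.1 r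

noncomputable def QH (g : ℝ → ℝ) : ℕ → List (ℕ × ℕ × ℕ × ℕ) → ℝ
  | a, [] => g ((2000000 * a : ℕ) / Du)
  | a, x :: r => ((x.1:ℝ) - a) / (2 * S) * (1 / 6 * g ((2000000 * a : ℕ) / Du) +
      5 / 6 * g ((nHi2 a x.1 : ℕ) / Du) + 5 / 6 * g ((nHi3 a x.1 : ℕ) / Du) +
      1 / 6 * g ((2000000 * x.1 : ℕ) / Du)) + QH g x.1 r

lemma S_val : (S:ℝ) = 67108864 := by norm_num [S]
lemma Du_val : (Du:ℝ) = 2000000 * (S:ℝ) := by norm_num [S, Du]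
lemma Spos : (0:ℝ) < S := by rw [S_val]; norm_num

lemma nEdge (a : ℕ) : ((2000000 * a : ℕ):ℝ) / Du = a / S := by
  have := Spos
  rw [Du_val]; push_cast; field_simp

lemma nMid_c (a b : ℕ) : ((nMid a b : ℕ):ℝ) / Du = ((a:ℝ) + b) / (2 * S) := by
  have := Spos
  rw [Du_val, nMid]; push_cast; field_simp; ring

lemma nPlus_c {a b : ℕ} (h : a ≤ b) (k : ℕ) : (((a + b) * 1000000 + (b - a) * k : ℕ):ℝ) / Du =
    ((a:ℝ) + b) / (2 * S) + (k / 1000000) * (((b:ℝ) - a) / (2 * S)) := by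
  have := Spos
  rw [Du_val, Nat.cast_add, Nat.cast_mul, Nat.cast_mul, Nat.cast_sub h]
  push_cast; field_simp; ring

lemma nMinus_c {a b : ℕ} (h : a ≤ b) (k : ℕ) (hk : k ≤ 1000000) :
    (((a + b) * 1000000 - (b - a) * k : ℕ):ℝ) / Du =
    ((a:ℝ) + b) / (2 * S) - (k / 1000000) * (((b:ℝ) - a) / (2 * S)) := by
  have := Spos
  have h1 : (b - a) * k ≤ (a + b) * 1000000 := Nat.mul_le_mul (by omega) hk
  rw [Du_val, Nat.cast_sub h1, Nat.cast_mul, Nat.cast_mul, Nat.cast_sub h]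
  push_cast; field_simp; ring

lemma edge_lo (a b : ℕ) : ((a:ℝ) + b) / (2 * S) - ((b:ℝ) - a) / (2 * S) = a / S := by
  have := Spos
  field_simp; ring

lemma edge_hi (a b : ℕ) : ((a:ℝ) + b) / (2 * S) + ((b:ℝ) - a) / (2 * S) = b / S := by
  have := Spos
  field_simp; ring

lemma half_nonneg {a b : ℕ} (h : a ≤ b) : (0:ℝ) ≤ ((b:ℝ) - a) / (2 * S) := by
  have h1 : (a:ℝ) ≤ b := by exact_mod_cast h
  exact div_nonneg (by linarith) (by have := Spos; linarith)

lemma QL_exp {y : ℝ} (hy : 0 < y) (l : List (ℕ × ℕ × ℕ × ℕ)) : ∀ a : ℕ, panLo a l = true →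
    QL (fun u => Real.exp (-(u * y))) a l ≤ Real.exp (-((a:ℝ) / S * y)) / y := by
  induction l with
  | nil => intro a _; rw [QL]; positivity
  | cons x r ih =>
    intro a h
    rw [panLo] at h
    simp only [Bool.and_eq_true] at h
    obtain ⟨⟨h1, -⟩, h2⟩ := h
    have h1 := Nat.le_of_ble_eq_true h1
    have h3 := ih _ h2
    have h4 := gauss_panel (r := ((774596:ℕ):ℝ) / 1000000) (m := ((a:ℝ) + x.1) / (2 * S)) (by norm_num)
      (half_nonneg h1) hy
    rw [edge_lo, edge_hi] at h4
    rw [QL, nLo1, nLo3, nMid_c, nPlus_c h1, nMinus_c h1 _ (by norm_num)]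
    linarith

lemma QH_exp {y : ℝ} (hy : 1 ≤ y) (l : List (ℕ × ℕ × ℕ × ℕ)) : ∀ a : ℕ, panHi a l = true →
    Real.exp (-((a:ℝ) / S * y)) / y ≤ QH (fun u => Real.exp (-(u * y))) a l := by
  induction l with
  | nil => intro a _; rw [QH, nEdge]; exact div_le_self (Real.exp_pos _).le hy
  | cons x r ih =>
    intro a h
    rw [panHi] at h
    simp only [Bool.and_eq_true] at h
    obtain ⟨⟨h1, -⟩, h2⟩ := h
    have h1 := Nat.le_of_ble_eq_true h1
    have h3 := ih _ h2
    have h4 := lob_panel (r := ((447214:ℕ):ℝ) / 1000000) (m := ((a:ℝ) + x.1) / (2 * S)) (by norm_num)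
      (half_nonneg h1) (lt_of_lt_of_le one_pos hy)
    rw [edge_lo, edge_hi] at h4
    rw [QH, nHi2, nHi3, nEdge, nEdge, nPlus_c h1, nMinus_c h1 _ (by norm_num)]
    linarith

lemma QL_hasSum {ι : Type} {f : ι → ℝ → ℝ} {F : ℝ → ℝ} (hf : ∀ u, 0 < u → HasSum (fun p => f p u) (F u))
    (l : List (ℕ × ℕ × ℕ × ℕ)) : ∀ a : ℕ, panLo a l = true →
    HasSum (fun p => QL (f p) a l) (QL F a l) := by
  induction l with
  | nil => intro a _; simp only [QL]; exact hasSum_zero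
  | cons x r ih =>
    intro a h
    rw [panLo] at h
    simp only [Bool.and_eq_true] at h
    obtain ⟨⟨h1, h3, h4, h5⟩, h2⟩ := h
    simp only [QL]
    exact (((((hf _ (u_pos (nodeLo_sound h3).1)).mul_left _).add
      ((hf _ (u_pos (nodeLo_sound h4).1)).mul_left _)).add
      ((hf _ (u_pos (nodeLo_sound h5).1)).mul_left _)).mul_left _).add (ih _ h2)

lemma QH_hasSum {ι : Type} {f : ι → ℝ → ℝ} {F : ℝ → ℝ} (hf : ∀ u, 0 < u → HasSum (fun p => f p u) (F u))
    (l : List (ℕ × ℕ × ℕ × ℕ)) : ∀ a : ℕ, 1 ≤ a → panHi a l = true →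
    HasSum (fun p => QH (f p) a l) (QH F a l) := by
  induction l with
  | nil => intro a ha _; simp only [QH]; exact hf _ (u_pos (by omega))
  | cons x r ih =>
    intro a ha h
    rw [panHi] at h
    simp only [Bool.and_eq_true] at h
    obtain ⟨⟨h1, h3, h4, h5⟩, h2⟩ := h
    have h1 := Nat.le_of_ble_eq_true h1
    simp only [QH]
    exact ((((((hf _ (u_pos (by omega))).mul_left _).add
      ((hf _ (u_pos (nodeHi_sound h3).1)).mul_left _)).add
      ((hf _ (u_pos (nodeHi_sound h4).1)).mul_left _)).add
      ((hf _ (u_pos (nodeHi_sound h5).1)).mul_left _)).mul_left _).add (ih _ (by omega) h2)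

lemma eLo_le (a : ℕ) : ((eLo a : ℕ):ℝ) / D ≤ Real.exp (-((a:ℝ) / Du * 0.8035)) := by
  have hD := Dpos
  have hDu := Dupos
  refine (negLo_le _).trans (Real.exp_le_exp.mpr (neg_le_neg ?_))
  have h := div_up (D * a * 8035) (Du * 10000)
  rw [le_div_iff₀ hD, Nat.cast_add, Nat.cast_one]
  refine le_trans (le_of_eq ?_) h
  push_cast; field_simp; ring

lemma eHi_ge (a : ℕ) : Real.exp (-((a:ℝ) / Du * 0.8036)) ≤ ((eHi a : ℕ):ℝ) / D := by
  have hD := Dpos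
  have hDu := Dupos
  refine le_trans (Real.exp_le_exp.mpr (neg_le_neg ?_)) (negHi_ge _)
  have h := div_dn (D * a * 8036) (Du * 10000)
  rw [div_le_iff₀ hD]
  refine h.trans (le_of_eq ?_)
  push_cast; field_simp; ring

lemma termLo {F : ℝ → ℝ} (hF : ∀ u, 0 < u → Real.exp (-(u * 0.8035)) * G u ≤ F u) {a L : ℕ}
    (h : nodeLo a L = true) : ((eLo a : ℕ):ℝ) / D * (L * V / D) ≤ F ((a:ℝ) / Du) := by
  obtain ⟨h1, h2⟩ := nodeLo_sound h
  refine le_trans ?_ (hF _ (u_pos h1))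
  exact mul_le_mul (eLo_le a) h2 (by positivity) (Real.exp_pos _).le

lemma termHi {F : ℝ → ℝ} (hF : ∀ u, 0 < u → F u ≤ Real.exp (-(u * 0.8036)) * G u) {a L : ℕ}
    (h : nodeHi a L = true) : F ((a:ℝ) / Du) ≤ ((eHi a : ℕ):ℝ) / D * (L * V / D) := by
  obtain ⟨h1, h2⟩ := nodeHi_sound h
  refine le_trans (hF _ (u_pos h1)) ?_
  exact mul_le_mul (eHi_ge a) h2 (T_nonneg.trans (T_le_G (u_pos h1))) (by positivity)

lemma panel_lo_c {w v d s e1 e2 e3 L1 L2 L3 : ℕ} (hd : (0:ℝ) < d) (hs : (0:ℝ) < s) :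
    (((w * v * (5 * (e1 * L1) + 8 * (e2 * L2) + 5 * (e3 * L3)) / (18 * s * d) : ℕ)):ℝ) / d ≤
    (w:ℝ) / (2 * s) * (5 / 9 * (e1 / d * (L1 * v / d)) + 8 / 9 * (e2 / d * (L2 * v / d)) +
      5 / 9 * (e3 / d * (L3 * v / d))) := by
  refine le_trans (div_le_div_of_nonneg_right (div_dn _ _) hd.le) (le_of_eq ?_)
  push_cast; field_simp; ring

lemma panel_hi_c {w v d s e0 e1 e2 e3 L0 L1 L2 L3 : ℕ} (hd : (0:ℝ) < d) (hs : (0:ℝ) < s) :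
    (w:ℝ) / (2 * s) * (1 / 6 * (e0 / d * (L0 * v / d)) + 5 / 6 * (e1 / d * (L1 * v / d)) +
      5 / 6 * (e2 / d * (L2 * v / d)) + 1 / 6 * (e3 / d * (L3 * v / d))) ≤
    (((w * v * (e0 * L0 + 5 * (e1 * L1) + 5 * (e2 * L2) + e3 * L3) / (12 * s * d) + 1 : ℕ)):ℝ) / d := by
  rw [Nat.cast_add, Nat.cast_one]
  refine le_trans (le_of_eq ?_) (div_le_div_of_nonneg_right (div_up _ _) hd.le)
  push_cast; field_simp; ring

lemma totLo_le {F : ℝ → ℝ} (hF : ∀ u, 0 < u → Real.exp (-(u * 0.8035)) * G u ≤ F u)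
    (l : List (ℕ × ℕ × ℕ × ℕ)) : ∀ a : ℕ, panLo a l = true →
    ((totLo a l : ℕ):ℝ) / D ≤ QL F a l := by
  induction l with
  | nil => intro a _; rw [QL, totLo, Nat.cast_zero, zero_div]
  | cons x r ih =>
    intro a h
    rw [panLo] at h
    simp only [Bool.and_eq_true] at h
    obtain ⟨⟨h1, h3, h4, h5⟩, h2⟩ := h
    have h1 := Nat.le_of_ble_eq_true h1
    have t3 := termLo hF h3
    have t4 := termLo hF h4
    have t5 := termLo hF h5
    have hh := half_nonneg h1
    rw [QL, totLo, Nat.cast_add, add_div]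
    refine add_le_add ((panel_lo_c Dpos Spos).trans ?_) (ih _ h2)
    rw [Nat.cast_sub h1]
    gcongr

lemma totHi_ge {F : ℝ → ℝ} (hF : ∀ u, 0 < u → F u ≤ Real.exp (-(u * 0.8036)) * G u)
    (l : List (ℕ × ℕ × ℕ × ℕ)) : ∀ a La : ℕ, nodeHi (2000000 * a) La = true → panHi a l = true →
    QH F a l ≤ ((totHi a La l : ℕ):ℝ) / D := by
  induction l with
  | nil =>
    intro a La h0 _
    have hD := Dpos
    have t0 := termHi hF h0
    rw [QH, totHi]
    refine t0.trans ?_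
    rw [Nat.cast_add, Nat.cast_one]
    refine le_trans (le_of_eq ?_) (div_le_div_of_nonneg_right (div_up _ _) hD.le)
    push_cast; field_simp
  | cons x r ih =>
    intro a La h0 h
    rw [panHi] at h
    simp only [Bool.and_eq_true] at h
    obtain ⟨⟨h1, h3, h4, h5⟩, h2⟩ := h
    have h1 := Nat.le_of_ble_eq_true h1
    have t0 := termHi hF h0
    have t3 := termHi hF h3
    have t4 := termHi hF h4
    have t5 := termHi hF h5
    have hh := half_nonneg h1
    rw [QH, totHi, Nat.cast_add, add_div]
    refine add_le_add (le_trans ?_ (panel_hi_c Dpos Spos)) (ih _ _ h5 h2)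
    rw [Nat.cast_sub h1]
    gcongr

end PZ

namespace PZ

noncomputable def ph (t : ℝ) (n : ℕ) : ℝ := 1 / ((n:ℝ) * (Real.log n + t))

lemma QL_smul (c : ℝ) (g : ℝ → ℝ) (l : List (ℕ × ℕ × ℕ × ℕ)) : ∀ a : ℕ,
    QL (fun u => c * g u) a l = c * QL g a l := by
  induction l with
  | nil => intro a; simp [QL]
  | cons x r ih => intro a; rw [QL, QL, ih]; ring

lemma QH_smul (c : ℝ) (g : ℝ → ℝ) (l : List (ℕ × ℕ × ℕ × ℕ)) : ∀ a : ℕ,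
    QH (fun u => c * g u) a l = c * QH g a l := by
  induction l with
  | nil => intro a; simp [QH]
  | cons x r ih => intro a; rw [QH, QH, ih]; ring

lemma headLo_le (l : List (ℕ × ℕ)) (h : ∀ x ∈ l, entryOk x = true) :
    ((headLo l : ℕ):ℝ) / D ≤ (l.map (fun x => ph 0.8035 x.1)).sum := by
  have hD := Dpos
  induction l with
  | nil => simp [headLo]
  | cons x r ih =>
    have h1 := ih (fun y hy => h y (List.mem_cons_of_mem _ hy))
    obtain ⟨e1, e2, e3⟩ := entry_sound x (h x List.mem_cons_self)
    have hx : (0:ℝ) < x.1 := by exact_mod_cast e1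
    have h3 := div_dn (D * D * 10000) (x.1 * ((x.2 + W) * 10000 + 8035 * D))
    rw [headLo, List.map_cons, List.sum_cons, Nat.cast_add, add_div]
    refine add_le_add (le_trans (div_le_div_of_nonneg_right h3 hD.le) ?_) h1
    have hl : 0 ≤ Real.log x.1 := Real.log_natCast_nonneg _
    have : (x.1:ℝ) * (Real.log x.1 + 0.8035) ≤ x.1 * (((x.2 + W : ℕ):ℝ) / D + 0.8035) := by gcongr
    refine le_trans (le_of_eq ?_) (one_div_le_one_div_of_le (by positivity) this)
    push_cast
    have hh : (0:ℝ) ≤ (x.2:ℝ) + W := by positivity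
    generalize (x.2:ℝ) + W = w at hh
    field_simp
    norm_num
    ring

lemma headHi_ge (l : List (ℕ × ℕ)) (h : ∀ x ∈ l, entryOk x = true) :
    (l.map (fun x => ph 0.8036 x.1)).sum ≤ ((headHi l : ℕ):ℝ) / D := by
  have hD := Dpos
  induction l with
  | nil => simp [headHi]
  | cons x r ih =>
    have h1 := ih (fun y hy => h y (List.mem_cons_of_mem _ hy))
    obtain ⟨e1, e2, e3⟩ := entry_sound x (h x List.mem_cons_self)
    have hx : (0:ℝ) < x.1 := by exact_mod_cast e1
    have h3 := div_up (D * D * 10000) (x.1 * (x.2 * 10000 + 8036 * D))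
    rw [headHi, List.map_cons, List.sum_cons, Nat.cast_add, add_div, Nat.cast_add, Nat.cast_one]
    refine add_le_add (le_trans ?_ (div_le_div_of_nonneg_right h3 hD.le)) h1
    have : x.1 * ((x.2:ℝ) / D + 0.8036) ≤ (x.1:ℝ) * (Real.log x.1 + 0.8036) := by gcongr
    refine le_trans (one_div_le_one_div_of_le (by positivity) this) (le_of_eq ?_)
    push_cast
    field_simp
    norm_num
    ring

noncomputable def fq (t : ℝ) (p : Nat.Primes) (u : ℝ) : ℝ :=
  tl (fun p : Nat.Primes => (p.1:ℝ) ^ (-(1 + u))) p * Real.exp (-(u * t))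

lemma fq_hasSum (t : ℝ) {u : ℝ} (hu : 0 < u) :
    HasSum (fun p => fq t p u) (T u * Real.exp (-(u * t))) := (T_hasSum hu).mul_right _

lemma ppos (p : Nat.Primes) : (0:ℝ) < p.1 := by exact_mod_cast p.2.pos

lemma fq_tail (t : ℝ) {p : Nat.Primes} (hp : p ∉ SP) :
    fq t p = fun u => (1 / (p.1:ℝ)) * Real.exp (-(u * (Real.log p.1 + t))) := by
  funext u
  have h0 := ppos p
  rw [fq, tl, if_neg hp, rpow_exp h0]
  have : -(u * (Real.log p.1 + t)) = -(u * Real.log p.1) + -(u * t) := by ring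
  rw [this, Real.exp_add]; ring

lemma fq_head (t : ℝ) {p : Nat.Primes} (hp : p ∈ SP) : fq t p = fun _ => 0 := by
  funext u
  rw [fq, tl, if_pos hp, zero_mul]

lemma log_tail {p : Nat.Primes} (hp : p ∉ SP) : 1 ≤ Real.log p.1 := by
  have h := not_mem_SP hp
  have h2 : (131:ℝ) ≤ p.1 := by exact_mod_cast h
  rw [Real.le_log_iff_exp_le (ppos p)]
  have := Real.exp_one_lt_d9
  linarith

lemma fq_nonneg (t : ℝ) (p : Nat.Primes) (u : ℝ) : 0 ≤ fq t p u := by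
  by_cases hp : p ∈ SP
  · rw [fq_head t hp]
  · rw [fq_tail t hp]
    have := ppos p
    positivity

lemma int_exp_y {y e : ℝ} (hy : 0 < y) :
    ∫ u in (0:ℝ)..e, Real.exp (-(u * y)) = (1 - Real.exp (-(e * y))) / y := by
  have h : ∀ u : ℝ, HasDerivAt (fun u => -Real.exp (-(u * y)) / y) (Real.exp (-(u * y))) u := by
    intro u
    have h1 : HasDerivAt (fun u : ℝ => -(u * y)) (-(1 * y)) u := ((hasDerivAt_id u).mul_const y).neg
    have h2 := (h1.exp.neg).div_const y
    refine h2.congr_deriv ?_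
    field_simp
  rw [intervalIntegral.integral_eq_sub_of_hasDerivAt (fun u _ => h u)
    ((by fun_prop : Continuous fun u : ℝ => Real.exp (-(u * y))).intervalIntegrable _ _)]
  simp
  ring

noncomputable def ep : ℝ := ((1:ℕ):ℝ) / S

lemma ep_val : ep = 1 / 2 ^ 26 := by rw [ep, S_val]; norm_num

lemma nz_int : ∫ u in (0:ℝ)..ep, (u - Real.log u) ≤ 20 / 2 ^ 26 := by
  rw [intervalIntegral.integral_sub (f := fun u : ℝ => u) (continuous_id.intervalIntegrable _ _) intervalIntegral.intervalIntegrable_log',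
    integral_log, integral_id]
  have h2 : Real.log ep = -(26 * Real.log 2) := by
    rw [ep_val, one_div, Real.log_inv, Real.log_pow]; norm_num
  have := Real.log_two_lt_d9
  rw [h2, ep_val]
  norm_num
  linarith

noncomputable def nz (t : ℝ) (p : Nat.Primes) : ℝ := ∫ u in (0:ℝ)..ep, fq t p u

lemma fq_ii (t : ℝ) (p : Nat.Primes) (a b : ℝ) : IntervalIntegrable (fq t p) volume a b := by
  apply Continuous.intervalIntegrable
  by_cases hp : p ∈ SP
  · rw [fq_head t hp]; fun_prop
  · rw [fq_tail t hp]; fun_prop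

lemma ep_pos : 0 < ep := by rw [ep_val]; norm_num

lemma nz_sum {t : ℝ} (ht : 0 ≤ t) (K : Finset Nat.Primes) : ∑ p ∈ K, nz t p ≤ 20 / 2 ^ 26 := by
  refine le_trans ?_ nz_int
  unfold nz
  rw [← intervalIntegral.integral_finsetSum (fun p _ => fq_ii t p _ _)]
  refine intervalIntegral.integral_mono_on_of_le_Ioo ep_pos.le ?_ ?_ ?_
  · have := IntervalIntegrable.sum K (fun p _ => fq_ii t p 0 ep)
    simpa [Finset.sum_fn] using this
  · exact (continuous_id.intervalIntegrable _ _).sub intervalIntegral.intervalIntegrable_log'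
  · intro u hu
    have h1 := sum_le_hasSum K (fun p _ => fq_nonneg t p u) (fq_hasSum t hu.1)
    refine h1.trans (le_trans ?_ (T_crude hu.1))
    refine mul_le_of_le_one_right T_nonneg ?_
    rw [Real.exp_le_one_iff]
    have := mul_nonneg hu.1.le ht
    linarith

lemma nz_nonneg (t : ℝ) (p : Nat.Primes) : 0 ≤ nz t p :=
  intervalIntegral.integral_nonneg ep_pos.le (fun u _ => fq_nonneg t p u)

lemma panHi1 : panHi 1 datH = true := by
  have h := panHi_true
  rw [Bool.and_eq_true] at h
  exact h.2

lemma nodeHi1 : nodeHi (2000000 * 1) LH0 = true := by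
  have h := panHi_true
  rw [Bool.and_eq_true] at h
  exact h.1

lemma tl_le_hi {t : ℝ} (ht : 0 ≤ t) (p : Nat.Primes) :
    tl (fun p : Nat.Primes => ph t p.1) p ≤ nz t p + QH (fq t p) 1 datH := by
  by_cases hp : p ∈ SP
  · have : QH (fun _ => (0:ℝ)) 1 datH = 0 := by
      have := QH_smul 0 (fun _ => 0) datH 1
      simpa using this
    rw [fq_head t hp, this, add_zero, tl, if_pos hp]
    exact nz_nonneg t p
  · have hl := log_tail hp
    have h0 := ppos p
    have hy : 1 ≤ Real.log p.1 + t := by linarith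
    rw [nz, fq_tail t hp, QH_smul, tl, if_neg hp, intervalIntegral.integral_const_mul, int_exp_y (by linarith),
      ← mul_add, ph, ← one_div_mul_one_div]
    refine mul_le_mul_of_nonneg_left ?_ (by positivity)
    have h := QH_exp hy datH 1 panHi1
    rw [← ep] at h
    refine le_trans (le_of_eq ?_) (add_le_add le_rfl h)
    ring

lemma QL_le_tl {t : ℝ} (ht : 0 ≤ t) (p : Nat.Primes) :
    QL (fq t p) 1 datL ≤ tl (fun p : Nat.Primes => ph t p.1) p := by
  by_cases hp : p ∈ SP
  · have : QL (fun _ => (0:ℝ)) 1 datL = 0 := by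
      have := QL_smul 0 (fun _ => 0) datL 1
      simpa using this
    rw [fq_head t hp, this, tl, if_pos hp]
  · have hl := log_tail hp
    have h0 := ppos p
    have hy : 0 < Real.log p.1 + t := by linarith
    rw [fq_tail t hp, QL_smul, tl, if_neg hp, ph, ← one_div_mul_one_div]
    refine mul_le_mul_of_nonneg_left ?_ (by positivity)
    refine (QL_exp hy datL 1 panLo_true).trans ?_
    refine div_le_div_of_nonneg_right ?_ hy.le
    rw [Real.exp_le_one_iff, ← ep]
    have := mul_pos ep_pos hy
    linarith

lemma ph_nonneg {t : ℝ} (ht : 0 ≤ t) (n : ℕ) : 0 ≤ ph t n := by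
  have := Real.log_natCast_nonneg n
  unfold ph; positivity

lemma tl_nonneg {t : ℝ} (ht : 0 ≤ t) (p : Nat.Primes) : 0 ≤ tl (fun p : Nat.Primes => ph t p.1) p := by
  unfold tl
  split_ifs
  · exact le_rfl
  · exact ph_nonneg ht _

lemma nz_summable : Summable (nz 0.8036) :=
  summable_of_sum_le (nz_nonneg _) (nz_sum (by norm_num))

lemma QH_hs : HasSum (fun p => QH (fq 0.8036 p) 1 datH) (QH (fun u => T u * Real.exp (-(u * 0.8036))) 1 datH) :=
  QH_hasSum (fun _ hu => fq_hasSum _ hu) datH 1 le_rfl panHi1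

lemma tl_summable : Summable (tl (fun p : Nat.Primes => ph 0.8036 p.1)) :=
  Summable.of_nonneg_of_le (tl_nonneg (by norm_num)) (tl_le_hi (by norm_num)) (nz_summable.add QH_hs.summable)

lemma ph_summable0 : Summable (fun p : Nat.Primes => ph 0.8036 p.1) := by
  refine (summable_congr_cofinite ?_).mp tl_summable
  rw [Filter.EventuallyEq, Filter.eventually_cofinite]
  refine SP.finite_toSet.subset ?_
  intro p hp
  by_contra hc
  exact hp (if_neg hc)

lemma log_prime (p : Nat.Primes) : 1 / 2 ≤ Real.log p.1 := by
  have h : (2:ℝ) ≤ p.1 := by exact_mod_cast p.2.two_le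
  have := Real.log_le_log two_pos h
  have := Real.log_two_gt_d9
  linarith

lemma ph_summable {t : ℝ} (ht : 0 ≤ t) : Summable (fun p : Nat.Primes => ph t p.1) := by
  refine Summable.of_nonneg_of_le (fun p => ph_nonneg ht _) (fun p => ?_) (ph_summable0.mul_left 3)
  have h0 := ppos p
  have hl := log_prime p
  unfold ph
  rw [← one_div_mul_one_div, ← one_div_mul_one_div, mul_left_comm]
  refine mul_le_mul_of_nonneg_left ?_ (by positivity)
  rw [mul_one_div, div_le_div_iff₀ (by linarith) (by linarith)]
  linarith

noncomputable def F (t : ℝ) : ℝ := ∑' p : Nat.Primes, ph t p.1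

lemma F_split {t : ℝ} (ht : 0 ≤ t) :
    HasSum (tl (fun p : Nat.Primes => ph t p.1)) (F t - (tabP.map (fun x => ph t x.1)).sum) := by
  rw [← sum_SP (fun n => ph t n)]
  exact tl_hasSum (ph_summable ht).hasSum

lemma F_hi : F 0.8036 < 1 := by
  have hD := Dpos
  have h1 := hasSum_le (tl_le_hi (by norm_num)) (F_split (t := 0.8036) (by norm_num))
    (nz_summable.hasSum.add QH_hs)
  have h2 : ∑' p, nz 0.8036 p ≤ 20 / 2 ^ 26 := nz_summable.tsum_le_of_sum_le (nz_sum (by norm_num))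
  have h3 := totHi_ge (F := fun u => T u * Real.exp (-(u * 0.8036))) (fun u hu => by
    rw [mul_comm]
    exact mul_le_mul_of_nonneg_left (T_le_G hu) (Real.exp_pos _).le) datH 1 LH0 nodeHi1 panHi1
  have h4 := headHi_ge tabP tab_sound.2.1
  have h5 := Nat.le_of_ble_eq_true totHi_true
  have h6 : ((headHi tabP : ℕ):ℝ) + (totHi 1 LH0 datH : ℕ) + 20 * ((D / S : ℕ):ℝ) + 1 ≤ D := by
    exact_mod_cast h5
  have h7 : ((D / S : ℕ):ℝ) = D / 2 ^ 26 := by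
    have : D / S = 17179869184 := by norm_num [D, S]
    rw [this]; norm_num [D]
  have h8 : ((headHi tabP : ℕ):ℝ) / D + ((totHi 1 LH0 datH : ℕ):ℝ) / D + 20 / 2 ^ 26 < 1 := by
    rw [h7] at h6
    have : ((headHi tabP : ℕ):ℝ) / D + ((totHi 1 LH0 datH : ℕ):ℝ) / D + 20 / 2 ^ 26 =
      (((headHi tabP : ℕ):ℝ) + (totHi 1 LH0 datH : ℕ) + 20 * ((D:ℝ) / 2 ^ 26)) / D := by
      field_simp
    rw [this, div_lt_one hD]
    linarith
  linarith

lemma F_lo : 1 < F 0.8035 := by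
  have hD := Dpos
  have h1 := hasSum_le (QL_le_tl (by norm_num))
    (QL_hasSum (fun _ hu => fq_hasSum 0.8035 hu) datL 1 panLo_true) (F_split (t := 0.8035) (by norm_num))
  have h3 := totLo_le (F := fun u => (51481 / 51480) * (T u * Real.exp (-(u * 0.8035)))) (fun u hu => by
    have := mul_le_mul_of_nonneg_left (G_le_T hu) (Real.exp_pos (-(u * 0.8035))).le
    linarith) datL 1 panLo_true
  rw [QL_smul] at h3
  have h4 := headLo_le tabP tab_sound.2.1
  have h5 := Nat.le_of_ble_eq_true totLo_true
  have h6 : (D:ℝ) * 51481 + 1 ≤ ((headLo tabP : ℕ):ℝ) * 51481 + (totLo 1 datL : ℕ) * 51480 := by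
    exact_mod_cast h5
  have h8 : 51481 < ((headLo tabP : ℕ):ℝ) / D * 51481 + ((totLo 1 datL : ℕ):ℝ) / D * 51480 := by
    have : ((headLo tabP : ℕ):ℝ) / D * 51481 + ((totLo 1 datL : ℕ):ℝ) / D * 51480 =
      (((headLo tabP : ℕ):ℝ) * 51481 + (totLo 1 datL : ℕ) * 51480) / D := by
      field_simp
    rw [this, lt_div_iff₀ hD]
    linarith
  linarith

end PZ

namespace PZ

lemma F_anti {s t : ℝ} (hs : 0 ≤ s) (hst : s < t) : F t < F s := by
  have hlt : ∀ p : Nat.Primes, ph t p.1 < ph s p.1 := by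
    intro p
    have h0 := ppos p
    have hl := log_prime p
    unfold ph
    apply one_div_lt_one_div_of_lt (mul_pos h0 (by linarith))
    exact mul_lt_mul_of_pos_left (by linarith) h0
  exact Summable.tsum_lt_tsum (i := ⟨2, Nat.prime_two⟩) (fun p => (hlt p).le) (hlt _)
    (ph_summable (by linarith)) (ph_summable hs)

lemma F_cont : ContinuousOn F (Set.Ici 0) := by
  refine continuousOn_tsum (u := fun p : Nat.Primes => ph 0 p.1) (fun p => ?_) (ph_summable le_rfl) ?_
  · intro t ht
    have h0 := ppos p
    have hl := log_prime p
    have ht' : (0:ℝ) ≤ t := ht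
    unfold ph
    have : ContinuousAt (fun t : ℝ => 1 / ((p.1:ℝ) * (Real.log p.1 + t))) t :=
      ContinuousAt.div (by fun_prop) (by fun_prop) (mul_pos h0 (by linarith)).ne'
    exact this.continuousWithinAt
  · intro p t ht
    have h0 := ppos p
    have hl := log_prime p
    have ht' : (0:ℝ) ≤ t := ht
    rw [Real.norm_of_nonneg (ph_nonneg ht' _)]
    unfold ph
    apply one_div_le_one_div_of_le (mul_pos h0 (by linarith))
    exact mul_le_mul_of_nonneg_left (by linarith) h0.le

lemma term_eq (p : Nat.Primes) (s t : ℝ) : (p.1:ℝ) ^ (-s) * Real.exp ((1 - s) * t) =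
    Real.exp t * Real.exp (-(Real.log p.1 + t) * s) := by
  rw [Real.rpow_def_of_pos (ppos p), ← Real.exp_add, ← Real.exp_add]
  congr 1; ring

lemma term_int (p : Nat.Primes) {t : ℝ} (ht : 0 ≤ t) :
    ∫ s in Set.Ioi (1:ℝ), (p.1:ℝ) ^ (-s) * Real.exp ((1 - s) * t) = ph t p.1 := by
  have hl := log_prime p
  have h0 := ppos p
  simp_rw [term_eq]
  rw [integral_const_mul, integral_exp_mul_Ioi (by linarith), mul_one, neg_add, Real.exp_add,
    Real.exp_neg, Real.exp_neg, Real.exp_log h0, ph]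
  have h1 : Real.log p.1 + t ≠ 0 := by linarith
  have h2 : -Real.log p.1 + -t ≠ 0 := by intro h; apply h1; linarith
  have := (Real.exp_pos t).ne'
  field_simp
  ring

lemma integral_eq {t : ℝ} (ht : 0 ≤ t) :
    (∫ s in Set.Ioi (1:ℝ), primeZeta s * Real.exp ((1 - s) * t)) = F t := by
  have h := hasSum_integral_of_summable_integral_norm
    (F := fun (p : Nat.Primes) (s : ℝ) => (p.1:ℝ) ^ (-s) * Real.exp ((1 - s) * t))
    (μ := volume.restrict (Set.Ioi (1:ℝ))) (fun p => by
      simp_rw [term_eq]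
      have hl := log_prime p
      exact (integrableOn_exp_mul_Ioi (by linarith) 1).const_mul _) (by
      have : ∀ p : Nat.Primes, ∫ s in Set.Ioi (1:ℝ), ‖(p.1:ℝ) ^ (-s) * Real.exp ((1 - s) * t)‖ = ph t p.1 := by
        intro p
        rw [← term_int p ht]
        congr 1
        funext s
        have := ppos p
        exact Real.norm_of_nonneg (by positivity)
      simp_rw [this]
      exact ph_summable ht)
  simp_rw [term_int _ ht] at h
  rw [F, h.tsum_eq]
  congr 1
  funext s
  rw [primeZeta, tsum_mul_right]

end PZ

/-- There exists a unique real `t ≥ 0` with `∫₁^∞ P(s) e^{(1−s)t} ds = 1`,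
and it lies in `(0.8035, 0.8036)`. -/
theorem stmt_2 :
    (∃! t : ℝ, 0 ≤ t ∧
      (∫ s in Set.Ioi (1:ℝ), primeZeta s * Real.exp ((1 - s) * t)) = 1) ∧
    (∀ t : ℝ, 0 ≤ t →
      (∫ s in Set.Ioi (1:ℝ), primeZeta s * Real.exp ((1 - s) * t)) = 1 →
      0.8035 < t ∧ t < 0.8036) := by
  have key : ∀ t : ℝ, 0 ≤ t → PZ.F t = 1 → 0.8035 < t ∧ t < 0.8036 := by
    intro t ht h
    constructor
    · by_contra hc
      rcases (not_lt.mp hc).lt_or_eq with hc | hc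
      · have := PZ.F_anti ht hc
        have := PZ.F_lo
        linarith
      · have := PZ.F_lo
        rw [← hc] at this
        linarith
    · by_contra hc
      rcases (not_lt.mp hc).lt_or_eq with hc | hc
      · have := PZ.F_anti (by norm_num) hc
        have := PZ.F_hi
        linarith
      · have := PZ.F_hi
        rw [hc] at this
        linarith
  refine ⟨?_, fun t ht h => key t ht (by rwa [PZ.integral_eq ht] at h)⟩
  have hc : ContinuousOn PZ.F (Set.Icc 0.8035 0.8036) :=
    PZ.F_cont.mono (fun x hx => le_trans (by norm_num) hx.1)
  obtain ⟨t, ht, hF⟩ := intermediate_value_Icc' (by norm_num) hc ⟨PZ.F_hi.le, PZ.F_lo.le⟩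
  have ht0 : 0 ≤ t := le_trans (by norm_num) ht.1
  refine ⟨t, ⟨ht0, by rw [PZ.integral_eq ht0, hF]⟩, ?_⟩
  rintro s ⟨hs, h⟩
  rw [PZ.integral_eq hs] at h
  rcases lt_trichotomy s t with hlt | heq | hgt
  · have := PZ.F_anti hs hlt
    linarith
  · exact heq
  · have := PZ.F_anti ht0 hgt
    linarith
end

section
/- Let h∞ be the unique real t ≥ 0 satisfying ∫₁^∞ P(s) e^{(1−s)t} ds = 1. If h > h∞ then there exists K such that f(N₁, h) < f(N_k, h) for all integers k ≥ K; and if 0 ≤ h < h∞ then there exists K such that f(N₁, h) > f(N_k, h) for all integers k ≥ K. -/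
open MeasureTheory Real

open Filter Topology ENNReal

noncomputable def hW (k : ℕ) (s : ℝ) : ℝ≥0∞ :=
  ∑' n : almostPrimes k, ENNReal.ofReal ((n.1 : ℝ) ^ (-s))

noncomputable def hPZ (s : ℝ) : ℝ≥0∞ := ∑' p : Nat.Primes, ENNReal.ofReal ((p.1 : ℝ) ^ (-s))

lemma mem_ap {k n : ℕ} : n ∈ almostPrimes k ↔ n ≠ 0 ∧ ArithmeticFunction.cardFactors n = k := by
  simp [almostPrimes, ArithmeticFunction.cardFactors_apply, Nat.pos_iff_ne_zero]

open Classical in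
lemma hW_eq (k : ℕ) (s : ℝ) :
    hW k s = ∑' n : ℕ, if n ∈ almostPrimes k then ENNReal.ofReal ((n : ℝ) ^ (-s)) else 0 := by
  unfold hW
  rw [tsum_subtype (almostPrimes k) (fun n => ENNReal.ofReal ((n : ℝ) ^ (-s)))]
  rfl

lemma hPZ_eq {s : ℝ} (hs : 1 < s) : hPZ s = ENNReal.ofReal (primeZeta s) := by
  unfold hPZ primeZeta
  rw [ENNReal.ofReal_tsum_of_nonneg]
  · intro n; positivity
  · exact Nat.Primes.summable_rpow.2 (by linarith)

lemma sum_hW {s : ℝ} (hs : 1 < s) :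
    ∑' k, hW k s = ENNReal.ofReal (∑' n : ℕ, 1 / (n : ℝ) ^ s) := by
  classical
  simp_rw [hW_eq]
  rw [ENNReal.tsum_comm, ENNReal.ofReal_tsum_of_nonneg]
  · congr 1; ext n
    rcases eq_or_ne n 0 with rfl | hn
    · simp [mem_ap, Real.zero_rpow (by linarith : s ≠ 0)]
    · simp only [mem_ap, hn, ne_eq, not_false_eq_true, true_and]
      rw [tsum_eq_single (ArithmeticFunction.cardFactors n)]
      · simp [Real.rpow_neg]
      · intro b hb; simp [hb.symm]
  · intro n; positivity
  · exact Real.summable_one_div_nat_rpow.2 hs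

lemma hW_ne_top {s : ℝ} (hs : 1 < s) (k : ℕ) : hW k s ≠ ⊤ := by
  have h := ENNReal.le_tsum (f := fun k => hW k s) k
  rw [sum_hW hs] at h
  exact ne_top_of_le_ne_top ENNReal.ofReal_ne_top h

lemma hW_zero (s : ℝ) : hW 0 s = 1 := by
  classical
  rw [hW_eq, tsum_eq_single 1]
  · simp [mem_ap]
  · intro n hn
    have : n ∉ almostPrimes 0 := by
      rw [mem_ap]; rintro ⟨h0, h⟩
      rw [ArithmeticFunction.cardFactors_eq_zero_iff_eq_zero_or_one] at h
      omega
    simp [this]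

lemma count_pp {n : ℕ} (hn : n ≠ 0) :
    ∑' p : Nat.Primes, ∑' a : ℕ, (if p.1 ^ (a + 1) ∣ n then (1 : ℝ≥0∞) else 0)
      = (ArithmeticFunction.cardFactors n : ℝ≥0∞) := by
  classical
  have h1 : ∀ p : Nat.Primes, ∑' a : ℕ, (if p.1 ^ (a + 1) ∣ n then (1 : ℝ≥0∞) else 0)
      = (n.factorization p.1 : ℝ≥0∞) := by
    intro p
    rw [tsum_eq_sum (s := Finset.range (n.factorization p.1))]
    · rw [Finset.sum_congr rfl (g := fun _ => (1 : ℝ≥0∞))]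
      · simp
      · intro a ha
        rw [if_pos]
        exact (Nat.Prime.pow_dvd_iff_le_factorization p.2 hn).2
          (Nat.succ_le_of_lt (Finset.mem_range.1 ha))
    · intro a ha
      rw [if_neg]
      intro h
      exact ha (Finset.mem_range.2 (Nat.lt_of_succ_le
        ((Nat.Prime.pow_dvd_iff_le_factorization p.2 hn).1 h)))
  simp_rw [h1]
  rw [ArithmeticFunction.cardFactors_eq_sum_factorization, Finsupp.sum, Nat.cast_sum]
  have h2 := tsum_subtype {p : ℕ | p.Prime} (fun p => (n.factorization p : ℝ≥0∞))
  have h3 : ∑' p : Nat.Primes, (n.factorization p.1 : ℝ≥0∞) =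
    ∑' x : ({p : ℕ | p.Prime} : Set ℕ), (n.factorization x.1 : ℝ≥0∞) := rfl
  rw [h3, h2, tsum_eq_sum (s := n.factorization.support)]
  · refine Finset.sum_congr rfl fun p hp => ?_
    rw [Set.indicator_of_mem]
    have : p ∈ n.primeFactors := by simpa using hp
    exact Nat.prime_of_mem_primeFactors this
  · intro p hp
    have : n.factorization p = 0 := Finsupp.notMem_support_iff.1 hp
    simp [Set.indicator, this]

lemma tsum_dvd (d : ℕ) (hd : d ≠ 0) (F : ℕ → ℝ≥0∞) :
    ∑' n : ℕ, (if d ∣ n then F n else 0) = ∑' m : ℕ, F (d * m) := by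
  rw [← Function.Injective.tsum_eq (g := fun m => d * m)]
  · simp
  · intro a b h; exact Nat.eq_of_mul_eq_mul_left (Nat.pos_of_ne_zero hd) h
  · intro n hn
    simp only [Function.mem_support, ne_eq, ite_eq_right_iff, Classical.not_imp] at hn
    obtain ⟨⟨m, rfl⟩, _⟩ := hn
    exact ⟨m, rfl⟩

lemma newton (k : ℕ) (s : ℝ) :
    ((k : ℝ≥0∞) + 1) * hW (k + 1) s
      = ∑ ij ∈ Finset.HasAntidiagonal.antidiagonal k, hPZ ((ij.1 + 1 : ℝ) * s) * hW ij.2 s := by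
  classical
  have e1 : ((k : ℝ≥0∞) + 1) * hW (k + 1) s = ∑' n : ℕ, ∑' p : Nat.Primes, ∑' a : ℕ,
      (if p.1 ^ (a + 1) ∣ n then
        (if n ∈ almostPrimes (k + 1) then ENNReal.ofReal ((n : ℝ) ^ (-s)) else 0) else 0) := by
    rw [hW_eq, ← ENNReal.tsum_mul_left]
    congr 1; ext n
    by_cases hn : n ∈ almostPrimes (k + 1)
    · have h := mem_ap.1 hn
      have hc := count_pp h.1
      rw [h.2] at hc
      push_cast at hc
      rw [← hc, if_pos hn, ← ENNReal.tsum_mul_right]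
      congr 1; ext p
      rw [← ENNReal.tsum_mul_right]
      congr 1; ext a
      simp
    · simp [hn]
  have e2 : ∀ (p : Nat.Primes) (a : ℕ), ∑' n : ℕ,
      (if p.1 ^ (a + 1) ∣ n then
        (if n ∈ almostPrimes (k + 1) then ENNReal.ofReal ((n : ℝ) ^ (-s)) else 0) else 0)
      = if a ≤ k then ENNReal.ofReal ((p.1 : ℝ) ^ (-((a + 1 : ℝ) * s))) * hW (k - a) s else 0 := by
    intro p a
    have hp0 : p.1 ^ (a + 1) ≠ 0 := pow_ne_zero _ p.2.ne_zero
    rw [tsum_dvd _ hp0]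
    have hm : ∀ m : ℕ, p.1 ^ (a + 1) * m ∈ almostPrimes (k + 1) ↔
        a ≤ k ∧ m ∈ almostPrimes (k - a) := by
      intro m
      rw [mem_ap, mem_ap]
      rcases eq_or_ne m 0 with rfl | hm
      · simp
      · rw [ArithmeticFunction.cardFactors_mul hp0 hm,
          ArithmeticFunction.cardFactors_apply_prime_pow p.2]
        have : p.1 ^ (a + 1) * m ≠ 0 := mul_ne_zero hp0 hm
        simp only [this, hm, ne_eq, not_false_eq_true, true_and]
        omega
    simp_rw [hm]
    by_cases ha : a ≤ k
    · simp only [ha, true_and, if_true]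
      rw [hW_eq, ← ENNReal.tsum_mul_left]
      congr 1; ext m
      split_ifs
      · rw [← ENNReal.ofReal_mul (by positivity)]
        congr 1
        push_cast
        rw [Real.mul_rpow (by positivity) (by positivity), ← Real.rpow_natCast,
          ← Real.rpow_mul (by positivity)]
        congr 2
        push_cast; ring
      · simp
    · simp [ha]
  rw [e1, ENNReal.tsum_comm]
  have e3 : ∀ p : Nat.Primes, ∑' n : ℕ, ∑' a : ℕ,
      (if p.1 ^ (a + 1) ∣ n then
        (if n ∈ almostPrimes (k + 1) then ENNReal.ofReal ((n : ℝ) ^ (-s)) else 0) else 0)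
      = ∑ a ∈ Finset.range (k + 1),
        ENNReal.ofReal ((p.1 : ℝ) ^ (-((a + 1 : ℝ) * s))) * hW (k - a) s := by
    intro p
    rw [ENNReal.tsum_comm]
    simp_rw [e2]
    rw [tsum_eq_sum (s := Finset.range (k + 1))]
    · refine Finset.sum_congr rfl fun a ha => ?_
      rw [if_pos (by simpa [Nat.lt_succ_iff] using ha)]
    · intro a ha
      rw [if_neg (by simpa [Nat.lt_succ_iff] using ha)]
  simp_rw [e3]
  rw [Summable.tsum_finsetSum (fun _ _ => ENNReal.summable),
    Finset.Nat.sum_antidiagonal_eq_sum_range_succ_mk]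
  refine Finset.sum_congr rfl fun a _ => ?_
  rw [ENNReal.tsum_mul_right]
  rfl

noncomputable def hq (s : ℝ) (i : ℕ) : ℝ := if i = 0 then 0 else primeZeta ((i + 1 : ℝ) * s)

noncomputable def hg (s : ℝ) : ℕ → ℝ
  | 0 => 1
  | n + 1 => (∑ j : Fin (n + 1), hq s (n - j.1) * hg s j.1) / (n + 1)
decreasing_by exact j.2

lemma hg_zero (s : ℝ) : hg s 0 = 1 := by rw [hg]

lemma hg_succ (s : ℝ) (n : ℕ) :
    hg s (n + 1) = (∑ j ∈ Finset.range (n + 1), hq s (n - j) * hg s j) / (n + 1) := by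
  rw [hg, Finset.sum_range]

lemma primeZeta_nonneg (s : ℝ) : 0 ≤ primeZeta s := tsum_nonneg fun _ => by positivity

lemma hq_nonneg (s : ℝ) (i : ℕ) : 0 ≤ hq s i := by
  unfold hq; split_ifs
  · exact le_rfl
  · exact primeZeta_nonneg _

lemma hg_nonneg (s : ℝ) (n : ℕ) : 0 ≤ hg s n := by
  induction n using Nat.strong_induction_on with
  | _ n ih =>
    rcases n with _ | n
    · rw [hg_zero]; norm_num
    · rw [hg_succ]
      refine div_nonneg (Finset.sum_nonneg fun j hj => ?_) (by positivity)
      exact mul_nonneg (hq_nonneg _ _) (ih j (Finset.mem_range.1 hj))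

lemma primeZeta_anti {s t : ℝ} (hs : 1 < s) (hst : s ≤ t) : primeZeta t ≤ primeZeta s := by
  unfold primeZeta
  refine Summable.tsum_le_tsum (fun p => ?_) (Nat.Primes.summable_rpow.2 (by linarith))
    (Nat.Primes.summable_rpow.2 (by linarith))
  exact Real.rpow_le_rpow_of_exponent_le (by exact_mod_cast p.2.one_lt.le) (by linarith)

lemma hq_anti {s t : ℝ} (hs : 1 ≤ s) (hst : s ≤ t) (i : ℕ) : hq t i ≤ hq s i := by
  unfold hq; split_ifs with h
  · exact le_rfl
  · have : (1 : ℝ) ≤ i := by exact_mod_cast Nat.one_le_iff_ne_zero.2 h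
    exact primeZeta_anti (by nlinarith) (by nlinarith)

lemma hg_anti {s t : ℝ} (hs : 1 ≤ s) (hst : s ≤ t) (n : ℕ) : hg t n ≤ hg s n := by
  induction n using Nat.strong_induction_on with
  | _ n ih =>
    rcases n with _ | n
    · rw [hg_zero, hg_zero]
    · rw [hg_succ, hg_succ]
      refine div_le_div_of_nonneg_right (Finset.sum_le_sum fun j hj => ?_) (by positivity)
      exact mul_le_mul (hq_anti hs hst _) (ih j (Finset.mem_range.1 hj)) (hg_nonneg _ _)
        (hq_nonneg _ _)

lemma hq_tendsto (i : ℕ) : Tendsto (fun s => hq s i) (𝓝[>] 1) (𝓝 (hq 1 i)) := by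
  unfold hq; split_ifs with h
  · exact tendsto_const_nhds
  · have hi : (1 : ℝ) ≤ i := by exact_mod_cast Nat.one_le_iff_ne_zero.2 h
    unfold primeZeta
    refine tendsto_tsum_of_dominated_convergence (bound := fun p : Nat.Primes => (p.1 : ℝ) ^ (-2 : ℝ))
      (Nat.Primes.summable_rpow.2 (by norm_num)) (fun p => ?_) ?_
    · have hp : (0 : ℝ) < p.1 := by exact_mod_cast p.2.pos
      have : Continuous fun s : ℝ => (p.1 : ℝ) ^ (-((i + 1 : ℝ) * s)) :=
        Real.continuous_const_rpow hp.ne' |>.comp (by fun_prop)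
      exact (this.tendsto 1).mono_left nhdsWithin_le_nhds
    · filter_upwards [self_mem_nhdsWithin] with s hs p
      have hs : 1 < s := hs
      rw [Real.norm_of_nonneg (by positivity)]
      exact Real.rpow_le_rpow_of_exponent_le (by exact_mod_cast p.2.one_lt.le) (by nlinarith)

lemma hg_tendsto (n : ℕ) : Tendsto (fun s => hg s n) (𝓝[>] 1) (𝓝 (hg 1 n)) := by
  induction n using Nat.strong_induction_on with
  | _ n ih =>
    rcases n with _ | n
    · simp_rw [hg_zero]; exact tendsto_const_nhds
    · simp_rw [hg_succ]
      refine Tendsto.div_const (tendsto_finsetSum _ fun j hj => ?_) _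
      exact (hq_tendsto _).mul (ih j (Finset.mem_range.1 hj))

lemma hq_le (i : ℕ) : hq 1 i ≤ 2 * primeZeta 2 * (1 / 2) ^ i := by
  unfold hq; split_ifs with h
  · have := primeZeta_nonneg 2; positivity
  · obtain ⟨j, rfl⟩ := Nat.exists_eq_succ_of_ne_zero h
    unfold primeZeta
    have hs : Summable fun p : Nat.Primes => (p.1 : ℝ) ^ (-2 : ℝ) :=
      Nat.Primes.summable_rpow.2 (by norm_num)
    rw [mul_right_comm, ← tsum_mul_left]
    refine Summable.tsum_le_tsum (fun p => ?_) (Nat.Primes.summable_rpow.2 ?_)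
      (hs.mul_left _)
    · have hp : (0 : ℝ) < p.1 := by exact_mod_cast p.2.pos
      have hp2 : (2 : ℝ) ≤ p.1 := by exact_mod_cast p.2.two_le
      have : -(((j.succ : ℕ) + 1 : ℝ) * 1) = -(j : ℝ) + -2 := by push_cast; ring
      rw [this, Real.rpow_add hp]
      refine mul_le_mul_of_nonneg_right ?_ (by positivity)
      rw [Real.rpow_neg hp.le, Real.rpow_natCast, Nat.succ_eq_add_one, pow_succ, one_div, inv_pow]
      have : ((p.1 : ℝ) ^ j)⁻¹ ≤ (2 ^ j)⁻¹ := by gcongr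
      linarith
    · push_cast
      have : (0 : ℝ) ≤ j := by positivity
      linarith

lemma hg_bound : ∃ C : ℝ, ∀ n, hg 1 n ≤ C * (3 / 4) ^ n := by
  set D := 2 * primeZeta 2 with hD
  have hD0 : 0 ≤ D := by have := primeZeta_nonneg 2; positivity
  obtain ⟨N, hN⟩ := exists_nat_ge (4 * D)
  set C := ∑ i ∈ Finset.range (N + 1), hg 1 i / (3 / 4) ^ i with hC
  have hC0 : 0 ≤ C := Finset.sum_nonneg fun i _ => div_nonneg (hg_nonneg _ _) (by positivity)
  refine ⟨C, fun n => ?_⟩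
  induction n using Nat.strong_induction_on with
  | _ n ih =>
    by_cases hn : n < N + 1
    · have h : hg 1 n / (3 / 4) ^ n ≤ C :=
        Finset.single_le_sum (f := fun i => hg 1 i / (3 / 4 : ℝ) ^ i)
          (fun i _ => div_nonneg (hg_nonneg _ _) (by positivity)) (Finset.mem_range.2 hn)
      rwa [div_le_iff₀ (by positivity)] at h
    · obtain ⟨m, rfl⟩ : ∃ m, n = m + 1 := ⟨n - 1, by omega⟩
      have hm : (N : ℝ) ≤ m := by exact_mod_cast (by omega : N ≤ m)
      rw [hg_succ, div_le_iff₀ (by positivity)]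
      have h1 : ∀ j ∈ Finset.range (m + 1), hq 1 (m - j) * hg 1 j
          ≤ D * C * (3 / 4) ^ m * (2 / 3) ^ (m - j) := by
        intro j hj
        have hj' : j ≤ m := Nat.lt_succ_iff.1 (Finset.mem_range.1 hj)
        obtain ⟨d, rfl⟩ := Nat.exists_eq_add_of_le hj'
        calc hq 1 (j + d - j) * hg 1 j ≤ (D * (1 / 2) ^ (j + d - j)) * (C * (3 / 4) ^ j) :=
              mul_le_mul (hq_le _) (ih j (by omega)) (hg_nonneg _ _) (by positivity)
          _ = D * C * (3 / 4) ^ (j + d) * (2 / 3) ^ (j + d - j) := by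
              rw [Nat.add_sub_cancel_left, pow_add,
                show (1 / 2 : ℝ) = 3 / 4 * (2 / 3) by norm_num, mul_pow]
              ring
      refine (Finset.sum_le_sum h1).trans ?_
      rw [← Finset.mul_sum]
      have h2 : ∑ j ∈ Finset.range (m + 1), (2 / 3 : ℝ) ^ (m - j) ≤ 3 := by
        have := Finset.sum_range_reflect (fun j => (2 / 3 : ℝ) ^ j) (m + 1)
        simp only [Nat.add_sub_cancel] at this
        rw [this]
        have h3 : (0 : ℝ) ≤ 2 / 3 := by norm_num
        refine (Summable.sum_le_tsum _ (fun _ _ => by positivity)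
          (summable_geometric_of_lt_one h3 (by norm_num))).trans ?_
        rw [tsum_geometric_of_lt_one h3 (by norm_num)]; norm_num
      calc D * C * (3 / 4) ^ m * ∑ j ∈ Finset.range (m + 1), (2 / 3 : ℝ) ^ (m - j)
          ≤ D * C * (3 / 4) ^ m * 3 := by gcongr
        _ = (C * (3 / 4) ^ (m + 1)) * (4 * D) := by rw [pow_succ]; ring
        _ ≤ (C * (3 / 4) ^ (m + 1)) * (m + 1) := by gcongr; linarith

lemma hg_summable {s : ℝ} (hs : 1 ≤ s) : Summable (hg s) := by
  obtain ⟨C, hC⟩ := hg_bound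
  refine Summable.of_nonneg_of_le (fun n => hg_nonneg _ _)
    (fun n => (hg_anti le_rfl hs n).trans (hC n)) ?_
  exact (summable_geometric_of_lt_one (by norm_num) (by norm_num)).mul_left C

lemma hG_tendsto : Tendsto (fun s => ∑' n, hg s n) (𝓝[>] 1) (𝓝 (∑' n, hg 1 n)) := by
  refine tendsto_tsum_of_dominated_convergence (hg_summable le_rfl) hg_tendsto ?_
  filter_upwards [self_mem_nhdsWithin] with s hs n
  rw [Real.norm_of_nonneg (hg_nonneg _ _)]
  exact hg_anti le_rfl (le_of_lt hs) n

lemma ps_unique (Q : PowerSeries ℝ) (x y : ℕ → ℝ) (h0 : x 0 = y 0)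
    (hx : ∀ n : ℕ, (n + 1 : ℝ) * x (n + 1)
      = ∑ ij ∈ Finset.HasAntidiagonal.antidiagonal n, PowerSeries.coeff ij.1 Q * x ij.2)
    (hy : ∀ n : ℕ, (n + 1 : ℝ) * y (n + 1)
      = ∑ ij ∈ Finset.HasAntidiagonal.antidiagonal n, PowerSeries.coeff ij.1 Q * y ij.2) :
    ∀ n, x n = y n := by
  intro n
  induction n using Nat.strong_induction_on with
  | _ n ih =>
    rcases n with _ | n
    · exact h0
    · have : (n + 1 : ℝ) * x (n + 1) = (n + 1 : ℝ) * y (n + 1) := by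
        rw [hx, hy]
        refine Finset.sum_congr rfl fun ij hij => ?_
        rw [ih ij.2]
        have := Finset.HasAntidiagonal.mem_antidiagonal.1 hij
        omega
      exact mul_left_cancel₀ (by positivity) this

/-- exponential coefficients -/
noncomputable def hp (s : ℝ) (m : ℕ) : ℝ := primeZeta s ^ m / m.factorial

lemma hW_conv {s : ℝ} (hs : 1 < s) (k : ℕ) :
    (hW k s).toReal = ∑ ij ∈ Finset.HasAntidiagonal.antidiagonal k, hg s ij.1 * hp s ij.2 := by
  let Q : PowerSeries ℝ := PowerSeries.mk fun i => primeZeta ((i + 1 : ℝ) * s)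
  let Gs : PowerSeries ℝ := PowerSeries.mk (hg s)
  let Es : PowerSeries ℝ := PowerSeries.mk (hp s)
  have hQ : Q = PowerSeries.mk (hq s) + PowerSeries.C (primeZeta s) := by
    ext i
    rcases eq_or_ne i 0 with rfl | hi
    · simp [Q, hq]
    · simp [Q, hq, hi, PowerSeries.coeff_C]
  have dE : PowerSeries.derivative ℝ Es = PowerSeries.C (primeZeta s) * Es := by
    ext n
    rw [PowerSeries.coeff_derivative, PowerSeries.coeff_C_mul]
    simp only [Es, PowerSeries.coeff_mk, hp]
    rw [Nat.factorial_succ, pow_succ]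
    push_cast
    field_simp
  have dG : PowerSeries.derivative ℝ Gs = PowerSeries.mk (hq s) * Gs := by
    ext n
    rw [PowerSeries.coeff_derivative, mul_comm (PowerSeries.mk (hq s)), PowerSeries.coeff_mul,
      Finset.Nat.sum_antidiagonal_eq_sum_range_succ_mk]
    simp only [Gs, PowerSeries.coeff_mk]
    rw [hg_succ, div_mul_cancel₀ _ (by positivity)]
    exact Finset.sum_congr rfl fun _ _ => mul_comm _ _
  have dC : PowerSeries.derivative ℝ (Gs * Es) = Q * (Gs * Es) := by
    rw [Derivation.leibniz, dE, dG, hQ]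
    simp only [smul_eq_mul]; ring
  have key := ps_unique Q (fun k => (hW k s).toReal) (fun k => PowerSeries.coeff k (Gs * Es))
    (by simp [hW_zero, Gs, Es, hp, hg_zero]) (fun n => ?_) (fun n => ?_) k
  · simpa [PowerSeries.coeff_mul, Gs, Es] using key
  · have := congrArg ENNReal.toReal (newton n s)
    rw [ENNReal.toReal_mul, ENNReal.toReal_sum] at this
    · have e : ((n : ℝ≥0∞) + 1).toReal = n + 1 := by
        rw [ENNReal.toReal_add (by simp) (by simp)]; simp
      rw [e] at this
      rw [this]
      refine Finset.sum_congr rfl fun ij _ => ?_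
      have hi : (0 : ℝ) ≤ ij.1 := by positivity
      rw [ENNReal.toReal_mul, hPZ_eq (by nlinarith), ENNReal.toReal_ofReal (primeZeta_nonneg _)]
      simp [Q]
    · intro ij _
      have hi : (0 : ℝ) ≤ ij.1 := by positivity
      rw [hPZ_eq (by nlinarith)]
      exact ENNReal.mul_ne_top ENNReal.ofReal_ne_top (hW_ne_top hs _)
  · rw [← PowerSeries.coeff_mul, ← dC, PowerSeries.coeff_derivative, mul_comm]

lemma hp_nonneg (s : ℝ) (m : ℕ) : 0 ≤ hp s m := by
  have := primeZeta_nonneg s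
  unfold hp; positivity

lemma hp_hasSum (s : ℝ) : HasSum (hp s) (Real.exp (primeZeta s)) := by
  rw [Real.exp_eq_exp_ℝ]
  exact NormedSpace.expSeries_div_hasSum_exp (primeZeta s)

lemma zeta_eq {s : ℝ} (hs : 1 < s) :
    ∑' n : ℕ, 1 / (n : ℝ) ^ s = (∑' n, hg s n) * Real.exp (primeZeta s) := by
  have h1 := congrArg ENNReal.toReal (sum_hW hs)
  rw [ENNReal.toReal_ofReal (tsum_nonneg fun _ => by positivity),
    ENNReal.tsum_toReal_eq (hW_ne_top hs)] at h1
  rw [← h1, ← (hp_hasSum s).tsum_eq, tsum_mul_tsum_eq_tsum_sum_antidiagonal_of_summable_norm]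
  · exact tsum_congr fun k => hW_conv hs k
  · exact (hg_summable hs.le).norm
  · exact (hp_hasSum s).summable.norm

lemma hG_pos : 0 < ∑' n, hg 1 n := by
  have := (hg_summable le_rfl).le_tsum 0 (fun n _ => hg_nonneg 1 n)
  rw [hg_zero] at this
  linarith

lemma exp_P_tendsto : Tendsto (fun s => (s - 1) * Real.exp (primeZeta s)) (𝓝[>] 1)
    (𝓝 (∑' n, hg 1 n)⁻¹) := by
  have h := tendsto_sub_mul_tsum_nat_rpow.div hG_tendsto hG_pos.ne'
  rw [one_div] at h
  refine h.congr' ?_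
  filter_upwards [self_mem_nhdsWithin] with s hs
  have hs : 1 < s := hs
  have hpos : 0 < ∑' n, hg s n := by
    have := (hg_summable hs.le).le_tsum 0 (fun n _ => hg_nonneg s n)
    rw [hg_zero] at this
    linarith
  rw [Pi.div_apply, zeta_eq hs]
  field_simp

noncomputable def hT (A : ℝ) (m : ℕ) (x : ℝ) : ℝ :=
  ∑ j ∈ Finset.range (m + 1), x * (Real.log (A / x) ^ j / j.factorial)

lemma hT_deriv {A x : ℝ} (hA : 0 < A) (hx : 0 < x) (m : ℕ) :
    HasDerivAt (hT A m) (Real.log (A / x) ^ m / m.factorial) x := by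
  have hL : HasDerivAt (fun x : ℝ => Real.log (A / x)) (-(1 / x)) x := by
    have h1 : HasDerivAt (fun x : ℝ => Real.log A - Real.log x) (-(1 / x)) x := by
      have := (Real.hasDerivAt_log hx.ne').const_sub (Real.log A)
      simpa using this
    refine h1.congr_of_eventuallyEq ?_
    filter_upwards [lt_mem_nhds hx] with y hy
    rw [Real.log_div hA.ne' hy.ne']
  induction m with
  | zero =>
    have : hT A 0 = fun x => x := by ext y; simp [hT]
    rw [this]; simpa using hasDerivAt_id' x
  | succ m ih =>
    have e : hT A (m + 1) = fun x => hT A m x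
        + x * (Real.log (A / x) ^ (m + 1) / (m + 1).factorial) := by
      ext y; simp only [hT]; rw [Finset.sum_range_succ]
    rw [e]
    have h2 := ih.add ((hasDerivAt_id x).mul ((hL.pow (m + 1)).div_const ((m + 1).factorial : ℝ)))
    refine h2.congr_deriv ?_
    simp only [id, Nat.factorial_succ]
    push_cast
    have : (m.factorial : ℝ) ≠ 0 := by positivity
    field_simp
    simp only [Pi.pow_apply]
    ring

lemma hT_zero (A : ℝ) (m : ℕ) : hT A m 0 = 0 := by simp [hT]

lemma hT_cont {A y : ℝ} (hA : 0 < A) (m : ℕ) : ContinuousOn (hT A m) (Set.Icc 0 y) := by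
  intro x hx
  rcases eq_or_lt_of_le hx.1 with h | h
  · subst h
    have : Tendsto (hT A m) (𝓝[>] 0) (𝓝 (hT A m 0)) := by
      rw [hT_zero]
      suffices H : Tendsto (hT A m) (𝓝[>] 0) (𝓝 (∑ j ∈ Finset.range (m + 1), 0)) by simpa using H
      refine tendsto_finsetSum _ fun j _ => ?_
      have h1 : Tendsto (fun x : ℝ => A / x) (𝓝[>] 0) atTop := by
        simp_rw [div_eq_mul_inv]
        exact tendsto_inv_nhdsGT_zero.const_mul_atTop hA
      have h2 := ((Real.tendsto_pow_log_div_mul_add_atTop 1 0 j one_ne_zero).comp h1).const_mul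
        (A / j.factorial)
      rw [mul_zero] at h2
      refine Tendsto.congr' ?_ h2
      filter_upwards [self_mem_nhdsWithin] with x hx
      have hx : 0 < x := hx
      have : (j.factorial : ℝ) ≠ 0 := by positivity
      simp only [Function.comp]
      field_simp
      ring
    have hc : ContinuousWithinAt (hT A m) (Set.Ici 0) 0 :=
      continuousWithinAt_Ioi_iff_Ici.1 this
    exact hc.mono Set.Icc_subset_Ici_self
  · exact (hT_deriv hA h m).continuousAt.continuousWithinAt

lemma hT_lintegral {A y : ℝ} (hy : 0 < y) (hyA : y ≤ A) (m : ℕ) :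
    ∫⁻ s in Set.Ioc 1 (1 + y), ENNReal.ofReal (Real.log (A / (s - 1)) ^ m / m.factorial)
      = ENNReal.ofReal (hT A m y) := by
  have hA : 0 < A := hy.trans_le hyA
  have hcont : ContinuousOn (fun s => hT A m (s - 1)) (Set.Icc 1 (1 + y)) := by
    refine (hT_cont (y := y) hA m).comp (by fun_prop) ?_
    intro s hs; exact ⟨by linarith [hs.1], by linarith [hs.2]⟩
  have hder : ∀ s ∈ Set.Ioo 1 (1 + y), HasDerivAt (fun s => hT A m (s - 1))
      (Real.log (A / (s - 1)) ^ m / m.factorial) s := by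
    intro s hs
    exact (hT_deriv hA (by linarith [hs.1] : 0 < s - 1) m).comp_sub_const s 1
  have hpos' : ∀ s ∈ Set.Ioc 1 (1 + y), 0 ≤ Real.log (A / (s - 1)) ^ m / m.factorial := by
    intro s hs
    have h1 : 0 < s - 1 := by linarith [hs.1]
    have : 0 ≤ Real.log (A / (s - 1)) :=
      Real.log_nonneg ((one_le_div h1).2 (by linarith [hs.2]))
    positivity
  have hint := intervalIntegral.integrableOn_deriv_of_nonneg hcont hder
    (fun s hs => hpos' s ⟨hs.1, hs.2.le⟩)
  rw [← ofReal_integral_eq_lintegral_ofReal hint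
    ((ae_restrict_iff' measurableSet_Ioc).2 (Eventually.of_forall hpos')),
    ← intervalIntegral.integral_of_le (by linarith),
    intervalIntegral.integral_eq_sub_of_hasDerivAt_of_le (by linarith) hcont hder
      ((intervalIntegrable_iff_integrableOn_Ioc_of_le (by linarith)).2 hint)]
  simp [hT_zero]

lemma hT_le {A y : ℝ} (hy : 0 < y) (hyA : y ≤ A) (m : ℕ) : hT A m y ≤ A := by
  have hA : 0 < A := hy.trans_le hyA
  unfold hT
  rw [← Finset.mul_sum]
  have h := Real.sum_le_exp_of_nonneg (Real.log_nonneg ((one_le_div hy).2 hyA)) (m + 1)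
  rw [Real.exp_log (by positivity)] at h
  calc _ ≤ y * (A / y) := by gcongr
    _ = A := by field_simp

lemma hT_nonneg {A y : ℝ} (hy : 0 < y) (hyA : y ≤ A) (m : ℕ) : 0 ≤ hT A m y := by
  have := Real.log_nonneg ((one_le_div hy).2 hyA)
  exact Finset.sum_nonneg fun j _ => by positivity

lemma hT_tendsto {A y : ℝ} (hy : 0 < y) (hA : 0 < A) :
    Tendsto (fun m => hT A m y) atTop (𝓝 A) := by
  have h := NormedSpace.expSeries_div_hasSum_exp (Real.log (A / y))
  rw [← Real.exp_eq_exp_ℝ, Real.exp_log (by positivity)] at h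
  have h2 := ((h.mul_left y).tendsto_sum_nat).comp (tendsto_add_atTop_nat 1)
  have e : y * (A / y) = A := by field_simp
  rw [e] at h2
  exact h2

/-- the integral form -/
noncomputable def hE (k : ℕ) (h : ℝ) : ℝ≥0∞ :=
  ∫⁻ s in Set.Ioi (1 : ℝ), hW k s * ENNReal.ofReal (Real.exp ((1 - s) * h))

lemma term_int {n : ℕ} (hn : 2 ≤ n) {h : ℝ} (hh : 0 ≤ h) :
    ∫⁻ s in Set.Ioi (1 : ℝ), ENNReal.ofReal ((n : ℝ) ^ (-s)) * ENNReal.ofReal (Real.exp ((1 - s) * h))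
      = ENNReal.ofReal (1 / ((n : ℝ) * (Real.log n + h))) := by
  have hn' : (2 : ℝ) ≤ n := by exact_mod_cast hn
  have hn0 : (0 : ℝ) < n := by linarith
  have hlog : 0 < Real.log n := Real.log_pos (by linarith)
  have ha : -(Real.log n + h) < 0 := by linarith
  have e : ∀ s : ℝ, ENNReal.ofReal ((n : ℝ) ^ (-s)) * ENNReal.ofReal (Real.exp ((1 - s) * h))
      = ENNReal.ofReal (Real.exp h * Real.exp (-(Real.log n + h) * s)) := by
    intro s
    rw [← ENNReal.ofReal_mul (by positivity), Real.rpow_def_of_pos hn0, ← Real.exp_add,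
      ← Real.exp_add]
    congr 2; ring
  simp_rw [e]
  rw [← ofReal_integral_eq_lintegral_ofReal ((integrableOn_exp_mul_Ioi ha 1).const_mul _)
    (Eventually.of_forall fun s => by positivity), integral_const_mul, integral_exp_mul_Ioi ha]
  congr 1
  have : Real.exp (-(Real.log n + h) * 1) = (Real.exp h)⁻¹ * (n : ℝ)⁻¹ := by
    rw [mul_one, neg_add, Real.exp_add, Real.exp_neg, Real.exp_neg, Real.exp_log hn0, mul_comm]
  rw [this]
  have : Real.log n + h ≠ 0 := by linarith
  field_simp

lemma two_pow_le {k n : ℕ} (h : n ∈ almostPrimes k) : 2 ^ k ≤ n := by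
  obtain ⟨h0, h1⟩ := mem_ap.1 h
  rw [ArithmeticFunction.cardFactors_apply] at h1
  rw [← Nat.prod_primeFactorsList h0, ← h1]
  exact List.pow_card_le_prod _ _ fun p hp => (Nat.prime_of_mem_primeFactorsList hp).two_le

lemma two_le_of_mem {k n : ℕ} (hk : 1 ≤ k) (h : n ∈ almostPrimes k) : 2 ≤ n :=
  (Nat.le_self_pow (by omega) 2).trans (two_pow_le h)

lemma hE_eq {k : ℕ} (hk : 1 ≤ k) {h : ℝ} (hh : 0 ≤ h) :
    hE k h = ∑' n : almostPrimes k, ENNReal.ofReal (1 / ((n.1 : ℝ) * (Real.log n.1 + h))) := by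
  unfold hE hW
  simp_rw [← ENNReal.tsum_mul_right]
  rw [lintegral_tsum]
  · exact tsum_congr fun n => term_int (two_le_of_mem hk n.2) hh
  · intro n
    have hn : (n.1 : ℝ) ≠ 0 := by
      have := two_le_of_mem hk n.2
      positivity
    have : Continuous fun s : ℝ => (n.1 : ℝ) ^ (-s) :=
      (Real.continuous_const_rpow hn).comp (by fun_prop)
    have h2 : Measurable fun s : ℝ => (n.1 : ℝ) ^ (-s) := this.measurable
    fun_prop

lemma transSum_eq {k : ℕ} (hk : 1 ≤ k) {h : ℝ} (hh : 0 ≤ h) :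
    transSum (almostPrimes k) h = (hE k h).toReal := by
  rw [hE_eq hk hh, ENNReal.tsum_toReal_eq (fun _ => ENNReal.ofReal_ne_top)]
  refine tsum_congr fun n => (ENNReal.toReal_ofReal ?_).symm
  have hn := two_le_of_mem hk n.2
  have : 0 ≤ Real.log n.1 := Real.log_natCast_nonneg _
  positivity

lemma hW_one (s : ℝ) : hW 1 s = hPZ s := by
  have := newton 0 s
  simpa [hW_zero] using this

lemma integral_eq {h : ℝ} :
    ∫ s in Set.Ioi (1:ℝ), primeZeta s * Real.exp ((1 - s) * h) = (hE 1 h).toReal := by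
  rw [integral_eq_lintegral_of_nonneg_ae]
  · congr 1
    refine setLIntegral_congr_fun measurableSet_Ioi fun s hs => ?_
    rw [hW_one, hPZ_eq hs, ENNReal.ofReal_mul (primeZeta_nonneg _)]
  · exact Eventually.of_forall fun s => mul_nonneg (primeZeta_nonneg s) (Real.exp_pos _).le
  · have hm : Measurable fun s => (hPZ s).toReal := by
      refine Measurable.ennreal_toReal ?_
      unfold hPZ
      refine Measurable.tsum fun p => ?_
      have : Continuous fun s : ℝ => (p.1 : ℝ) ^ (-s) :=
        (Real.continuous_const_rpow (by exact_mod_cast p.2.ne_zero)).comp (by fun_prop)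
      have h2 : Measurable fun s : ℝ => (p.1 : ℝ) ^ (-s) := this.measurable
      fun_prop
    have hm2 : Measurable fun s => (hPZ s).toReal * Real.exp ((1 - s) * h) := by fun_prop
    refine hm2.aestronglyMeasurable.congr ?_
    refine (ae_restrict_iff' measurableSet_Ioi).2 (Eventually.of_forall fun s hs => ?_)
    simp only
    rw [hPZ_eq hs, ENNReal.toReal_ofReal (primeZeta_nonneg _)]

lemma hW_eq_ofReal {s : ℝ} (hs : 1 < s) (k : ℕ) :
    hW k s = ∑ i ∈ Finset.range (k + 1), ENNReal.ofReal (hg s i) * ENNReal.ofReal (hp s (k - i)) := by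
  rw [← ENNReal.ofReal_toReal (hW_ne_top hs k), hW_conv hs,
    Finset.Nat.sum_antidiagonal_eq_sum_range_succ_mk, ENNReal.ofReal_sum_of_nonneg]
  · refine Finset.sum_congr rfl fun i _ => ?_
    rw [ENNReal.ofReal_mul (hg_nonneg _ _)]
  · intro i _; exact mul_nonneg (hg_nonneg _ _) (hp_nonneg _ _)

lemma meas_log (A : ℝ) (m : ℕ) :
    Measurable fun s : ℝ => ENNReal.ofReal (Real.log (A / (s - 1)) ^ m / m.factorial) := by
  fun_prop

lemma tail_bound {δ : ℝ} (hδ : 0 < δ) {h : ℝ} (hh : 0 ≤ h) {k : ℕ} (hk : 1 ≤ k) :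
    ∫⁻ s in Set.Ioi (1 + δ), hW k s * ENNReal.ofReal (Real.exp ((1 - s) * h))
      ≤ ENNReal.ofReal ((∑' n : ℕ, 1 / (n : ℝ) ^ (1 + δ)) / (k * Real.log 2)) := by
  set Z := ∑' n : ℕ, 1 / (n : ℝ) ^ (1 + δ) with hZ
  have hZ0 : 0 ≤ Z := tsum_nonneg fun _ => by positivity
  have hl2 : 0 < Real.log 2 := Real.log_pos (by norm_num)
  have hk' : (1 : ℝ) ≤ k := by exact_mod_cast hk
  have ha : -(k * Real.log 2) < 0 := by
    have : 0 < k * Real.log 2 := by positivity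
    linarith
  have hWZ : hW k (1 + δ) ≤ ENNReal.ofReal Z := by
    rw [hZ, ← sum_hW (by linarith : 1 < 1 + δ)]
    exact ENNReal.le_tsum (f := fun k => hW k (1 + δ)) k
  have hpt : ∀ s ∈ Set.Ioi (1 + δ), hW k s * ENNReal.ofReal (Real.exp ((1 - s) * h))
      ≤ ENNReal.ofReal (Z * Real.exp (k * Real.log 2 * (1 + δ)) * Real.exp (-(k * Real.log 2) * s)) := by
    intro s hs
    have hs : 1 + δ < s := hs
    have h1 : ENNReal.ofReal (Real.exp ((1 - s) * h)) ≤ 1 := by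
      rw [ENNReal.ofReal_le_one, Real.exp_le_one_iff]
      nlinarith
    have h2 : hW k s ≤ hW k (1 + δ) * ENNReal.ofReal (Real.exp (-(k * Real.log 2) * (s - (1 + δ)))) := by
      unfold hW
      rw [← ENNReal.tsum_mul_right]
      refine ENNReal.tsum_le_tsum fun n => ?_
      rw [← ENNReal.ofReal_mul (by positivity)]
      refine ENNReal.ofReal_le_ofReal ?_
      have hn2 : 2 ^ k ≤ n.1 := two_pow_le n.2
      have hn2' : (2 : ℝ) ^ k ≤ n.1 := by exact_mod_cast hn2
      have hn0 : (0 : ℝ) < n.1 := lt_of_lt_of_le (by positivity) hn2'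
      have e : -s = -(1 + δ) + -(s - (1 + δ)) := by ring
      rw [e, Real.rpow_add hn0]
      refine mul_le_mul_of_nonneg_left ?_ (by positivity)
      rw [Real.rpow_def_of_pos hn0, Real.exp_le_exp]
      have hlog : k * Real.log 2 ≤ Real.log n.1 := by
        rw [← Real.log_pow]; exact Real.log_le_log (by positivity) hn2'
      nlinarith
    calc _ ≤ (hW k (1 + δ) * ENNReal.ofReal (Real.exp (-(k * Real.log 2) * (s - (1 + δ))))) * 1 := by
          gcongr
      _ ≤ ENNReal.ofReal Z * ENNReal.ofReal (Real.exp (-(k * Real.log 2) * (s - (1 + δ)))) := by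
          rw [mul_one]; gcongr
      _ = _ := by
          rw [← ENNReal.ofReal_mul hZ0, mul_assoc Z, ← Real.exp_add]
          congr 3; ring
  refine (setLIntegral_mono' measurableSet_Ioi hpt).trans ?_
  rw [← ofReal_integral_eq_lintegral_ofReal ((integrableOn_exp_mul_Ioi ha (1 + δ)).const_mul _)
    (Eventually.of_forall fun s => by positivity), integral_const_mul, integral_exp_mul_Ioi ha]
  refine ENNReal.ofReal_le_ofReal (le_of_eq ?_)
  have : Real.exp (-(k * Real.log 2) * (1 + δ)) = (Real.exp (k * Real.log 2 * (1 + δ)))⁻¹ := by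
    rw [neg_mul, Real.exp_neg]
  rw [this]
  field_simp

lemma hE_upper {h : ℝ} (hh : 0 ≤ h) {b : ℝ} (hb : 1 < b) :
    ∀ᶠ k in atTop, hE k h ≤ ENNReal.ofReal b := by
  set G := ∑' n, hg 1 n with hG
  have hG0 : 0 < G := hG_pos
  set A := (1 + b) / 2 * G⁻¹ with hA
  have hA0 : 0 < A := by positivity
  have hlt : G⁻¹ < A := by
    have : 0 < G⁻¹ := by positivity
    rw [hA]; nlinarith
  have hev := exp_P_tendsto.eventually (gt_mem_nhds hlt)
  obtain ⟨u, hu, hsub⟩ := mem_nhdsGT_iff_exists_Ioc_subset.1 hev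
  have hu : 1 < u := hu
  set δ := min (u - 1) A with hδ
  have hδ0 : 0 < δ := lt_min (by linarith) hA0
  have hδA : δ ≤ A := min_le_right _ _
  have hδu : 1 + δ ≤ u := by have : δ ≤ u - 1 := min_le_left _ _; linarith
  -- head
  have head : ∀ k, ∫⁻ s in Set.Ioc 1 (1 + δ), hW k s * ENNReal.ofReal (Real.exp ((1 - s) * h))
      ≤ ENNReal.ofReal ((1 + b) / 2) := by
    intro k
    have hpt : ∀ s ∈ Set.Ioc 1 (1 + δ), hW k s * ENNReal.ofReal (Real.exp ((1 - s) * h))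
        ≤ ∑ i ∈ Finset.range (k + 1), ENNReal.ofReal (hg 1 i) *
          ENNReal.ofReal (Real.log (A / (s - 1)) ^ (k - i) / (k - i).factorial) := by
      intro s hs
      have hs1 : 0 < s - 1 := by linarith [hs.1]
      have h1 : ENNReal.ofReal (Real.exp ((1 - s) * h)) ≤ 1 := by
        rw [ENNReal.ofReal_le_one, Real.exp_le_one_iff]
        nlinarith
      have hP : primeZeta s ≤ Real.log (A / (s - 1)) := by
        rw [Real.le_log_iff_exp_le (by positivity), le_div_iff₀ hs1, mul_comm]
        exact le_of_lt (hsub ⟨hs.1, hs.2.trans hδu⟩)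
      calc _ ≤ hW k s * 1 := by gcongr
        _ = hW k s := mul_one _
        _ ≤ _ := by
          rw [hW_eq_ofReal hs.1]
          refine Finset.sum_le_sum fun i _ => ?_
          refine mul_le_mul' (ENNReal.ofReal_le_ofReal (hg_anti le_rfl hs.1.le i))
            (ENNReal.ofReal_le_ofReal ?_)
          unfold hp
          have := primeZeta_nonneg s
          gcongr
    refine (setLIntegral_mono' measurableSet_Ioc hpt).trans ?_
    rw [lintegral_finsetSum _ (fun i _ => (meas_log A _).const_mul _)]
    simp_rw [lintegral_const_mul _ (meas_log A _), hT_lintegral hδ0 hδA]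
    calc _ ≤ ∑ i ∈ Finset.range (k + 1), ENNReal.ofReal (hg 1 i) * ENNReal.ofReal A := by
          refine Finset.sum_le_sum fun i _ => ?_
          gcongr
          exact hT_le hδ0 hδA _
      _ = ENNReal.ofReal ((∑ i ∈ Finset.range (k + 1), hg 1 i) * A) := by
          rw [← Finset.sum_mul, ← ENNReal.ofReal_sum_of_nonneg (fun i _ => hg_nonneg 1 i),
            ← ENNReal.ofReal_mul (Finset.sum_nonneg fun i _ => hg_nonneg 1 i)]
      _ ≤ ENNReal.ofReal (G * A) := by
          gcongr
          exact (hg_summable le_rfl).sum_le_tsum _ (fun i _ => hg_nonneg 1 i)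
      _ = _ := by rw [hA]; congr 1; field_simp
  have htail : Tendsto (fun k : ℕ => (∑' n : ℕ, 1 / (n : ℝ) ^ (1 + δ)) / (k * Real.log 2))
      atTop (𝓝 0) :=
    (tendsto_natCast_atTop_atTop.atTop_mul_const (Real.log_pos (by norm_num))).const_div_atTop _
  filter_upwards [htail.eventually (gt_mem_nhds (by linarith : (0 : ℝ) < (b - 1) / 2)),
    eventually_ge_atTop 1] with k hk hk1
  unfold hE
  rw [← Set.Ioc_union_Ioi_eq_Ioi (by linarith : (1 : ℝ) ≤ 1 + δ)]
  calc _ ≤ _ := lintegral_union_le _ _ _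
    _ ≤ ENNReal.ofReal ((1 + b) / 2) + ENNReal.ofReal ((b - 1) / 2) :=
      add_le_add (head k) ((tail_bound hδ0 hh hk1).trans (ENNReal.ofReal_le_ofReal hk.le))
    _ = ENNReal.ofReal b := by
      rw [← ENNReal.ofReal_add (by linarith) (by linarith)]; congr 1; ring

lemma hE_lower {h : ℝ} (hh : 0 ≤ h) {b : ℝ} (hb0 : 0 ≤ b) (hb : b < 1) :
    ∀ᶠ k in atTop, ENNReal.ofReal b ≤ hE k h := by
  set G := ∑' n, hg 1 n with hG
  have hG0 : 0 < G := hG_pos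
  have hGi : 0 < G⁻¹ := by positivity
  have hI : ∃ I : ℕ, b < (∑ i ∈ Finset.range I, hg 1 i) * G⁻¹ := by
    have h1 := ((hg_summable le_rfl).hasSum.tendsto_sum_nat).mul_const G⁻¹
    rw [← hG, mul_inv_cancel₀ hG0.ne'] at h1
    exact (h1.eventually (lt_mem_nhds hb)).exists
  obtain ⟨I, hI⟩ := hI
  set S := ∑ i ∈ Finset.range I, hg 1 i with hS
  have hS0 : 0 < S := by
    have : 0 < S * G⁻¹ := hb0.trans_lt hI
    exact pos_of_mul_pos_left this hGi.le
  obtain ⟨B, hB1, hB2⟩ : ∃ B, b / S < B ∧ B < G⁻¹ := exists_between (by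
    rw [div_lt_iff₀ hS0, mul_comm]; exact hI)
  have hB0 : 0 < B := lt_of_le_of_lt (by positivity) hB1
  have hSB : b < S * B := by rw [div_lt_iff₀ hS0] at hB1; linarith
  obtain ⟨u, hu, hsub⟩ := mem_nhdsGT_iff_exists_Ioc_subset.1
    (exp_P_tendsto.eventually (lt_mem_nhds hB2))
  have hu : 1 < u := hu
  have hcont : Tendsto (fun s => (∑ i ∈ Finset.range I, hg s i * Real.exp ((1 - s) * h)) * B)
      (𝓝[>] 1) (𝓝 (S * B)) := by
    refine Tendsto.mul_const _ (tendsto_finsetSum _ fun i _ => ?_)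
    have : Tendsto (fun s : ℝ => Real.exp ((1 - s) * h)) (𝓝[>] 1) (𝓝 1) := by
      have hc : Continuous fun s : ℝ => Real.exp ((1 - s) * h) := by fun_prop
      have := (hc.tendsto 1).mono_left (nhdsWithin_le_nhds (s := Set.Ioi 1))
      simpa using this
    simpa using (hg_tendsto i).mul this
  have hle : ∀ᶠ s in 𝓝[>] (1 : ℝ), s ≤ min u (1 + B) :=
    mem_nhdsWithin_of_mem_nhds (Iic_mem_nhds (lt_min hu (by linarith)))
  obtain ⟨t, ⟨ht1, ht2⟩, ht3⟩ :=
    (((hcont.eventually (lt_mem_nhds hSB)).and hle).and self_mem_nhdsWithin).exists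
  have ht3 : 1 < t := ht3
  obtain ⟨δ, rfl⟩ : ∃ δ, t = 1 + δ := ⟨t - 1, by ring⟩
  have hδ0 : 0 < δ := by linarith
  have hδB : δ ≤ B := by have := ht2.trans (min_le_right _ _); linarith
  have hδu : 1 + δ ≤ u := ht2.trans (min_le_left _ _)
  have hlim : Tendsto (fun k : ℕ => ∑ i ∈ Finset.range I,
      (hg (1 + δ) i * Real.exp ((1 - (1 + δ)) * h)) * hT B (k - i) δ) atTop
      (𝓝 ((∑ i ∈ Finset.range I, hg (1 + δ) i * Real.exp ((1 - (1 + δ)) * h)) * B)) := by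
    rw [Finset.sum_mul]
    refine tendsto_finsetSum _ fun i _ => Tendsto.const_mul _ ?_
    exact (hT_tendsto hδ0 hB0).comp (tendsto_sub_atTop_nat i)
  filter_upwards [hlim.eventually (lt_mem_nhds ht1), eventually_ge_atTop I] with k hk hkI
  have hc0 : ∀ i, 0 ≤ hg (1 + δ) i * Real.exp ((1 - (1 + δ)) * h) := fun i =>
    mul_nonneg (hg_nonneg _ _) (Real.exp_pos _).le
  have hpt : ∀ s ∈ Set.Ioc 1 (1 + δ), ∑ i ∈ Finset.range I,
      ENNReal.ofReal (hg (1 + δ) i * Real.exp ((1 - (1 + δ)) * h)) *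
        ENNReal.ofReal (Real.log (B / (s - 1)) ^ (k - i) / (k - i).factorial)
      ≤ hW k s * ENNReal.ofReal (Real.exp ((1 - s) * h)) := by
    intro s hs
    have hs1 : 0 < s - 1 := by linarith [hs.1]
    have hL : 0 ≤ Real.log (B / (s - 1)) :=
      Real.log_nonneg ((one_le_div hs1).2 (by linarith [hs.2]))
    have hP : Real.log (B / (s - 1)) ≤ primeZeta s := by
      rw [Real.log_le_iff_le_exp (by positivity), div_le_iff₀ hs1, mul_comm]
      exact le_of_lt (hsub ⟨hs.1, hs.2.trans hδu⟩)
    rw [hW_eq_ofReal hs.1, Finset.sum_mul]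
    refine (Finset.sum_le_sum fun i _ => ?_).trans (Finset.sum_le_sum_of_subset
      (Finset.range_subset_range.2 (by omega : I ≤ k + 1)))
    rw [ENNReal.ofReal_mul (hg_nonneg _ _), mul_right_comm]
    refine mul_le_mul' (mul_le_mul' (ENNReal.ofReal_le_ofReal (hg_anti hs.1.le hs.2 i))
      (ENNReal.ofReal_le_ofReal ?_)) (ENNReal.ofReal_le_ofReal ?_)
    · unfold hp; gcongr
    · rw [Real.exp_le_exp]; nlinarith [hs.2]
  calc ENNReal.ofReal b ≤ ENNReal.ofReal (∑ i ∈ Finset.range I,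
      (hg (1 + δ) i * Real.exp ((1 - (1 + δ)) * h)) * hT B (k - i) δ) :=
        ENNReal.ofReal_le_ofReal hk.le
    _ = ∑ i ∈ Finset.range I, ENNReal.ofReal (hg (1 + δ) i * Real.exp ((1 - (1 + δ)) * h)) *
        ENNReal.ofReal (hT B (k - i) δ) := by
        rw [ENNReal.ofReal_sum_of_nonneg
          (fun i _ => mul_nonneg (hc0 i) (hT_nonneg hδ0 hδB _))]
        exact Finset.sum_congr rfl fun i _ => ENNReal.ofReal_mul (hc0 i)
    _ = ∫⁻ s in Set.Ioc 1 (1 + δ), ∑ i ∈ Finset.range I,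
        ENNReal.ofReal (hg (1 + δ) i * Real.exp ((1 - (1 + δ)) * h)) *
        ENNReal.ofReal (Real.log (B / (s - 1)) ^ (k - i) / (k - i).factorial) := by
        rw [lintegral_finsetSum _ (fun i _ => (meas_log B _).const_mul _)]
        simp_rw [lintegral_const_mul _ (meas_log B _), hT_lintegral hδ0 hδB]
    _ ≤ ∫⁻ s in Set.Ioc 1 (1 + δ), hW k s * ENNReal.ofReal (Real.exp ((1 - s) * h)) :=
        setLIntegral_mono' measurableSet_Ioc hpt
    _ ≤ hE k h := lintegral_mono_set Set.Ioc_subset_Ioi_self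

lemma transSum_one_lt {a b : ℝ} (ha : 0 ≤ a) (hab : a < b)
    (hs : Summable fun n : almostPrimes 1 => 1 / ((n.1 : ℝ) * (Real.log n.1 + a))) :
    transSum (almostPrimes 1) b < transSum (almostPrimes 1) a := by
  have hlt : ∀ n : almostPrimes 1, 1 / ((n.1 : ℝ) * (Real.log n.1 + b))
      < 1 / ((n.1 : ℝ) * (Real.log n.1 + a)) := by
    intro n
    have hn : (2 : ℝ) ≤ n.1 := by exact_mod_cast two_le_of_mem le_rfl n.2
    have hl : 0 < Real.log n.1 := Real.log_pos (by linarith)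
    apply one_div_lt_one_div_of_lt
    · positivity
    · have : (0 : ℝ) < n.1 := by linarith
      gcongr
  have hs' : Summable fun n : almostPrimes 1 => 1 / ((n.1 : ℝ) * (Real.log n.1 + b)) := by
    refine Summable.of_nonneg_of_le (fun n => ?_) (fun n => (hlt n).le) hs
    have : 0 ≤ Real.log n.1 := Real.log_natCast_nonneg _
    have : 0 ≤ b := by linarith
    positivity
  exact Summable.tsum_lt_tsum (i := ⟨2, by simp [mem_ap, ArithmeticFunction.cardFactors_apply_prime Nat.prime_two]⟩)
    (fun n => (hlt n).le) (hlt _) hs' hs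

lemma summable_down {a b : ℝ} (ha : 0 ≤ a) (hab : a < b)
    (hs : Summable fun n : almostPrimes 1 => 1 / ((n.1 : ℝ) * (Real.log n.1 + b))) :
    Summable fun n : almostPrimes 1 => 1 / ((n.1 : ℝ) * (Real.log n.1 + a)) := by
  have hl2 : 0 < Real.log 2 := Real.log_pos (by norm_num)
  refine Summable.of_nonneg_of_le (fun n => ?_) (fun n => ?_) (hs.mul_left (1 + b / Real.log 2))
  · have : 0 ≤ Real.log n.1 := Real.log_natCast_nonneg _
    positivity
  · have hn : (2 : ℝ) ≤ n.1 := by exact_mod_cast two_le_of_mem le_rfl n.2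
    have hl : Real.log 2 ≤ Real.log n.1 := Real.log_le_log (by norm_num) hn
    have hl0 : 0 < Real.log n.1 := by linarith
    have hn0 : (0 : ℝ) < n.1 := by linarith
    have hb : 0 < b := by linarith
    rw [mul_one_div, div_le_div_iff₀ (by positivity) (by positivity), one_mul]
    have h1 : Real.log n.1 + b ≤ (1 + b / Real.log 2) * Real.log n.1 := by
      have : b / Real.log 2 * Real.log 2 = b := by field_simp
      have : b / Real.log 2 * Real.log 2 ≤ b / Real.log 2 * Real.log n.1 := by gcongr
      linarith
    calc (n.1 : ℝ) * (Real.log n.1 + b) ≤ n.1 * ((1 + b / Real.log 2) * Real.log n.1) := by gcongr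
      _ ≤ n.1 * ((1 + b / Real.log 2) * (Real.log n.1 + a)) := by gcongr; linarith
      _ = _ := by ring

/-- Let `hinf` be the unique real `t ≥ 0` with `∫₁^∞ P(s) e^{(1−s)t} ds = 1`.
If `h > hinf` then `f(N₁,h) < f(N_k,h)` for all sufficiently large `k`;
if `0 ≤ h < hinf` then `f(N₁,h) > f(N_k,h)` for all sufficiently large `k`. -/
theorem stmt_3 (hinf : ℝ)
    (hhinf : ∀ t : ℝ,
      (0 ≤ t ∧ (∫ s in Set.Ioi (1:ℝ), primeZeta s * Real.exp ((1 - s) * t)) = 1) ↔ t = hinf) :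
    (∀ h : ℝ, hinf < h → ∃ K : ℕ, ∀ k : ℕ, K ≤ k →
      transSum (almostPrimes 1) h < transSum (almostPrimes k) h) ∧
    (∀ h : ℝ, 0 ≤ h → h < hinf → ∃ K : ℕ, ∀ k : ℕ, K ≤ k →
      transSum (almostPrimes 1) h > transSum (almostPrimes k) h) := by
  obtain ⟨h0, h1⟩ := (hhinf hinf).2 rfl
  rw [integral_eq, ← transSum_eq le_rfl h0] at h1
  have hs : Summable fun n : almostPrimes 1 => 1 / ((n.1 : ℝ) * (Real.log n.1 + hinf)) := by
    by_contra hc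
    rw [transSum, tsum_eq_zero_of_not_summable hc] at h1
    exact zero_ne_one h1
  constructor
  · intro h hh
    have hh0 : 0 ≤ h := h0.trans hh.le
    have hlt := transSum_one_lt h0 hh hs
    rw [h1] at hlt
    obtain ⟨b, hb1, hb2⟩ := exists_between hlt
    have hb0 : 0 ≤ b := by
      refine le_trans ?_ hb1.le
      rw [transSum_eq le_rfl hh0]; exact ENNReal.toReal_nonneg
    obtain ⟨K, hK⟩ := eventually_atTop.1 ((hE_lower hh0 hb0 hb2).and
      ((hE_upper hh0 one_lt_two).and (eventually_ge_atTop 1)))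
    refine ⟨K, fun k hk => hb1.trans_le ?_⟩
    obtain ⟨e1, e2, e3⟩ := hK k hk
    rw [transSum_eq e3 hh0]
    exact (ENNReal.ofReal_le_iff_le_toReal (ne_top_of_le_ne_top ENNReal.ofReal_ne_top e2)).1 e1
  · intro h hh0 hh
    have hlt := transSum_one_lt hh0 hh (summable_down hh0 hh hs)
    rw [h1] at hlt
    obtain ⟨b, hb1, hb2⟩ := exists_between hlt
    obtain ⟨K, hK⟩ := eventually_atTop.1 ((hE_upper hh0 hb1).and (eventually_ge_atTop 1))
    refine ⟨K, fun k hk => lt_of_le_of_lt ?_ hb2⟩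
    obtain ⟨e1, e3⟩ := hK k hk
    rw [transSum_eq e3 hh0]
    exact ENNReal.toReal_le_of_le_ofReal (by linarith) e1
end

section
/- For every integer k ≥ 1 and every real s > 1, P_k(s) = (1/k) ∑_{j=1}^{k} P_{k−j}(s) P(js), where P_0(s) = 1 by convention and P = P₁ is the prime zeta function. -/
open MeasureTheory Real

open scoped ENNReal

noncomputable def aux_a (s : ℝ) (n : ℕ) : ℝ≥0∞ := ENNReal.ofReal ((n : ℝ) ^ (-s))

open Classical in
noncomputable def aux_P (k : ℕ) (s : ℝ) : ℝ≥0∞ :=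
  ∑' n : ℕ, if n ∈ almostPrimes k then aux_a s n else 0

lemma aux_tsum_sub (S : Set ℕ) [DecidablePred (· ∈ S)] (f : ℕ → ℝ≥0∞) :
    ∑' n : S, f n = ∑' n : ℕ, if n ∈ S then f n else 0 := by
  rw [tsum_subtype S f]
  congr 1; ext n
  by_cases h : n ∈ S <;> simp [h]

lemma aux_Pk (k : ℕ) (s : ℝ) : Pk k s = (aux_P k s).toReal := by
  classical
  unfold aux_P Pk
  rw [← aux_tsum_sub, ENNReal.tsum_toReal_eq (by intro a; simp [aux_a])]
  congr 1; ext n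
  rw [aux_a, ENNReal.toReal_ofReal (by positivity)]

noncomputable def aux_Z (s : ℝ) : ℝ≥0∞ := ∑' p : Nat.Primes, aux_a s p.1

lemma aux_primeZeta (s : ℝ) : primeZeta s = (aux_Z s).toReal := by
  unfold aux_Z primeZeta
  rw [ENNReal.tsum_toReal_eq (by intro a; simp [aux_a])]
  congr 1; ext n
  rw [aux_a, ENNReal.toReal_ofReal (by positivity)]

lemma aux_fin (s : ℝ) (hs : 1 < s) : ∑' n : ℕ, aux_a s n ≠ ⊤ := by
  have h : Summable (fun n : ℕ => (n : ℝ) ^ (-s)) := Real.summable_nat_rpow.2 (by linarith)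
  unfold aux_a
  rw [← ENNReal.ofReal_tsum_of_nonneg (fun n => by positivity) h]
  exact ENNReal.ofReal_ne_top

lemma aux_P_fin (k : ℕ) (s : ℝ) (hs : 1 < s) : aux_P k s ≠ ⊤ := by
  refine ne_top_of_le_ne_top (aux_fin s hs) (ENNReal.tsum_le_tsum fun n => ?_)
  split_ifs <;> simp

lemma aux_Z_fin (s : ℝ) (hs : 1 < s) : aux_Z s ≠ ⊤ := by
  refine ne_top_of_le_ne_top (aux_fin s hs) ?_
  exact ENNReal.tsum_comp_le_tsum_of_injective Subtype.val_injective _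

lemma aux_mem (p : ℕ) (hp : p.Prime) (j k m : ℕ) (hj : j ≤ k) :
    p ^ j * m ∈ almostPrimes k ↔ m ∈ almostPrimes (k - j) := by
  have hpp : 0 < p ^ j := pow_pos hp.pos j
  rcases Nat.eq_zero_or_pos m with rfl | hm
  · simp [almostPrimes]
  · have h := (Nat.perm_primeFactorsList_mul hpp.ne' hm.ne').length_eq
    simp only [almostPrimes, Set.mem_setOf_eq, h, List.length_append, hp.primeFactorsList_pow,
      List.length_replicate]
    constructor
    · rintro ⟨_, h⟩; exact ⟨hm, by omega⟩
    · rintro ⟨_, h⟩; exact ⟨by positivity, by omega⟩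

lemma aux_a_mul (s : ℝ) (p j m : ℕ) :
    aux_a s (p ^ j * m) = aux_a s m * aux_a (j * s) p := by
  unfold aux_a
  rw [← ENNReal.ofReal_mul (by positivity)]
  congr 1
  push_cast
  rw [Real.mul_rpow (by positivity) (by positivity), ← Real.rpow_natCast,
    ← Real.rpow_mul (by positivity), mul_comm]
  congr 2; ring

open Classical in
lemma aux_prod (k j : ℕ) (hj : j ≤ k) (s : ℝ) :
    aux_P (k - j) s * aux_Z (j * s) =
      ∑' n : ℕ, ∑' p : Nat.Primes, if n ∈ almostPrimes k ∧ p.1 ^ j ∣ n then aux_a s n else 0 := by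
  rw [ENNReal.tsum_comm, aux_Z, ← ENNReal.tsum_mul_left]
  congr 1; ext p
  have hpp : 0 < p.1 ^ j := pow_pos p.2.pos j
  have hinj : Function.Injective (fun m : ℕ => p.1 ^ j * m) :=
    fun a b h => Nat.eq_of_mul_eq_mul_left hpp h
  rw [← hinj.tsum_eq, aux_P, ← ENNReal.tsum_mul_right]
  · congr 1; ext m
    simp only [aux_mem p.1 p.2 j k m hj, dvd_mul_right, and_true, aux_a_mul]
    split_ifs <;> simp
  · intro n hn
    simp only [Function.mem_support, ne_eq, ite_eq_right_iff, not_forall] at hn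
    obtain ⟨⟨_, c, rfl⟩, _⟩ := hn
    exact ⟨c, rfl⟩

open Classical in
lemma aux_count (k n : ℕ) (hn : n ∈ almostPrimes k) :
    ∑ j ∈ Finset.Icc 1 k, ∑' p : Nat.Primes, (if p.1 ^ j ∣ n then (1 : ℝ≥0∞) else 0) = k := by
  obtain ⟨hn0, hk⟩ := hn
  rw [← ArithmeticFunction.cardFactors_apply] at hk
  have h1 : ∀ p : ℕ, p.Prime → ∑ j ∈ Finset.Icc 1 k, (if p ^ j ∣ n then (1 : ℝ≥0∞) else 0)
      = (n.factorization p : ℝ≥0∞) := by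
    intro p hp
    rw [Finset.sum_boole]
    congr 1
    have : Finset.filter (fun j => p ^ j ∣ n) (Finset.Icc 1 k)
        = Finset.Icc 1 (n.factorization p) := by
      ext j
      simp only [Finset.mem_filter, Finset.mem_Icc, hp.pow_dvd_iff_le_factorization hn0.ne']
      have : n.factorization p ≤ k := by
        rw [← hk, ArithmeticFunction.cardFactors_eq_sum_factorization, Finsupp.sum]
        by_cases h : p ∈ n.factorization.support
        · exact Finset.single_le_sum (f := fun p => n.factorization p)
            (fun _ _ => Nat.zero_le _) h
        · rw [Finsupp.notMem_support_iff.1 h]; exact Nat.zero_le _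
      omega
    rw [this]; simp
  rw [← Summable.tsum_finsetSum (fun _ _ => ENNReal.summable)]
  have h2 : ∀ p : Nat.Primes, ∑ j ∈ Finset.Icc 1 k, (if p.1 ^ j ∣ n then (1 : ℝ≥0∞) else 0)
      = (n.factorization p.1 : ℝ≥0∞) := fun p => h1 p.1 p.2
  rw [tsum_congr h2]
  have h3 := aux_tsum_sub {p | p.Prime} (fun p => (n.factorization p : ℝ≥0∞))
  refine h3.trans ?_
  rw [tsum_eq_sum (s := n.factorization.support)]
  · rw [← hk, ArithmeticFunction.cardFactors_eq_sum_factorization, Finsupp.sum, Nat.cast_sum]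
    refine Finset.sum_congr rfl fun p hp => ?_
    have : p.Prime := Nat.prime_of_mem_primeFactors (by simpa using hp)
    simp [this]
  · intro p hp
    rw [Finsupp.notMem_support_iff.1 hp]; simp

lemma aux_main (k : ℕ) (s : ℝ) :
    ∑ j ∈ Finset.Icc 1 k, aux_P (k - j) s * aux_Z (j * s) = k * aux_P k s := by
  classical
  rw [Finset.sum_congr rfl fun j hj => aux_prod k j (Finset.mem_Icc.1 hj).2 s,
    ← Summable.tsum_finsetSum (fun _ _ => ENNReal.summable), aux_P, ← ENNReal.tsum_mul_left]
  congr 1; ext n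
  by_cases hn : n ∈ almostPrimes k
  · simp only [hn, true_and, if_true]
    rw [← aux_count k n hn, Finset.sum_mul]
    refine Finset.sum_congr rfl fun j _ => ?_
    rw [← ENNReal.tsum_mul_right]
    congr 1; ext p
    split_ifs <;> simp
  · simp [hn]

/-- For every `k ≥ 1` and real `s > 1`,
`P_k(s) = (1/k) ∑_{j=1}^k P_{k−j}(s) P(js)` (with `P_0 = 1`). -/
theorem stmt_6 (k : ℕ) (hk : 1 ≤ k) (s : ℝ) (hs : 1 < s) :
    Pk k s = (1 / (k : ℝ)) * ∑ j ∈ Finset.Icc 1 k, Pk (k - j) s * primeZeta ((j : ℝ) * s) := by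
  have h := congrArg ENNReal.toReal (aux_main k s)
  rw [ENNReal.toReal_sum, ENNReal.toReal_mul, ENNReal.toReal_natCast] at h
  · simp only [aux_Pk, aux_primeZeta]
    simp only [ENNReal.toReal_mul] at h
    rw [h]
    have : (k : ℝ) ≠ 0 := by positivity
    field_simp
  · intro j hj
    have hj1 : (1 : ℝ) ≤ j := by exact_mod_cast (Finset.mem_Icc.1 hj).1
    exact ENNReal.mul_ne_top (aux_P_fin _ s hs) (aux_Z_fin _ (by nlinarith))
end
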